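/- Let (U,ρ) be a complete separable metric space and let t ↦ μ[·;t] belong to W_1(ℝ, M(U)). Then Mod μ[·;·] = Σ_{𝓕 ∈ C_b(U,ℝ)} Mod ∫_U 𝓕(x) μ[dx;·]; that is, the module of the measure-valued function μ[·;·] equals the additive group generated by the union over all continuous bounded 𝓕 : U → ℝ of the modules of the Weyl almost periodic real functions t ↦ ∫_U 𝓕(x) μ[dx;t]. -/

import Mathlib

open MeasureTheory Filter Topology TopologicalSpace
open scoped ENNReal Pointwise

noncomputable section

/-- The truncated ("bounded") distance `ρ'(x,y) = min {1, ρ(x,y)}` on a metric space. -/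
def bdist {α : Type*} [PseudoMetricSpace α] : α → α → ℝ := fun x y => min 1 (dist x y)

/-- The Hausdorff distance `dist_{ρ'}` (corresponding to the truncated metric `ρ'`)
between non-empty closed subsets of a metric space. -/
def clDist {α : Type*} [MetricSpace α] : Closeds α → Closeds α → ℝ :=
  fun A B => (min 1 (EMetric.hausdorffEdist (A : Set α) (B : Set α))).toReal

/-- The Hausdorff distance `dist_ρ` between (non-empty closed bounded) subsets. -/
def clbDist {α : Type*} [MetricSpace α] : Closeds α → Closeds α → ℝ :=
  fun A B => Metric.hausdorffDist (A : Set α) (B : Set α)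

/-- `D^{(d)}_{p,l}(f,g) = ( sup_ξ (1/l) ∫_ξ^{ξ+l} d(f t, g t)^p dt )^{1/p}`,
valued in `ℝ≥0∞`. -/
def weylD {α : Type*} (d : α → α → ℝ) (p l : ℝ) (f g : ℝ → α) : ℝ≥0∞ :=
  (⨆ ξ : ℝ, ENNReal.ofReal (1 / l) *
      ∫⁻ t in Set.Icc ξ (ξ + l), ENNReal.ofReal (d (f t) (g t) ^ p)) ^ (1 / p)

/-- The Weyl semimetric `D^{(d)}_p(f,g) = lim_{l → +∞} D^{(d)}_{p,l}(f,g)`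
(the limit exists; it is formalized here as a `limsup`). -/
def weylDinf {α : Type*} (d : α → α → ℝ) (p : ℝ) (f g : ℝ → α) : ℝ≥0∞ :=
  Filter.limsup (fun l => weylD d p l f g) Filter.atTop

/-- Membership in `M_p(ℝ, α)`: `f` is (strongly) measurable and
`sup_ξ ∫_ξ^{ξ+1} d(f t, x₀)^p dt < +∞`. -/
def MemMp {α : Type*} [TopologicalSpace α] (d : α → α → ℝ) (p : ℝ) (x₀ : α)
    (f : ℝ → α) : Prop :=
  AEStronglyMeasurable f MeasureTheory.volume ∧
  ∃ C : ℝ, ∀ ξ : ℝ,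
    (∫⁻ t in Set.Icc ξ (ξ + 1), ENNReal.ofReal (d (f t) x₀ ^ p)) ≤ ENNReal.ofReal C

/-- A set `T ⊆ ℝ` is relatively dense. -/
def RelDense (T : Set ℝ) : Prop := ∃ a > 0, ∀ ξ : ℝ, (Set.Icc ξ (ξ + a) ∩ T).Nonempty

/-- The set of `(ε, D^{(d)}_{p,l})`-almost periods of `f`. -/
def APeriodsL {α : Type*} (d : α → α → ℝ) (p l ε : ℝ) (f : ℝ → α) : Set ℝ :=
  {τ | weylD d p l f (fun t => f (t + τ)) < ENNReal.ofReal ε}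

/-- The set `P^{(d)}_p(ε; f)` of `(ε, D^{(d)}_p)`-almost periods of `f`. -/
def APeriods {α : Type*} (d : α → α → ℝ) (p ε : ℝ) (f : ℝ → α) : Set ℝ :=
  {τ | weylDinf d p f (fun t => f (t + τ)) < ENNReal.ofReal ε}

/-- Membership in the space `W_p(ℝ, α)` of Weyl almost periodic functions of order `p`
w.r.t. the distance `d` (with distinguished point `x₀`). -/
def MemWp {α : Type*} [TopologicalSpace α] (d : α → α → ℝ) (p : ℝ) (x₀ : α)
    (f : ℝ → α) : Prop :=
  MemMp d p x₀ f ∧ ∀ ε > 0, ∃ l > 0, RelDense (APeriodsL d p l ε f)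

/-- The module `Mod f`: the additive group of all `λ ∈ ℝ` such that `e^{iλτ_j} → 1`
for every `f`-returning sequence `{τ_j}` (a sequence with `D^{(d)}_1(f, f(·+τ_j)) → 0`,
where `d` is the relevant bounded distance). -/
def WMod {α : Type*} (d : α → α → ℝ) (f : ℝ → α) : Set ℝ :=
  {lam : ℝ | ∀ τ : ℕ → ℝ,
    Tendsto (fun j => weylDinf d 1 f (fun t => f (t + τ j))) atTop (nhds 0) →
    Tendsto (fun j => Complex.exp (Complex.I * ((lam * τ j : ℝ) : ℂ))) atTop (nhds 1)}

/-- `κ_W(T) = lim_{l → +∞} sup_ξ (1/l) meas([ξ, ξ+l] ∩ T)` (formalized as a `limsup`). -/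
def kappaW (T : Set ℝ) : ℝ≥0∞ :=
  Filter.limsup (fun l : ℝ => ⨆ ξ : ℝ,
    ENNReal.ofReal (1 / l) * MeasureTheory.volume (Set.Icc ξ (ξ + l) ∩ T)) Filter.atTop

/-- Membership in `M*_p(ℝ, α)`. -/
def MemMpStar {α : Type*} [TopologicalSpace α] (d : α → α → ℝ) (p : ℝ) (x₀ : α)
    (f : ℝ → α) : Prop :=
  MemMp d p x₀ f ∧
  ∀ ε > 0, ∃ δ > 0, ∀ T : Set ℝ, MeasurableSet T → kappaW T < ENNReal.ofReal δ →
    Filter.limsup (fun l : ℝ => ⨆ ξ : ℝ, ENNReal.ofReal (1 / l) *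
        ∫⁻ t in Set.Icc ξ (ξ + l) ∩ T, ENNReal.ofReal (d (f t) x₀ ^ p)) Filter.atTop
      < ENNReal.ofReal ε

/-- Distance from a point to a set w.r.t. the distance `d`, valued in `ℝ≥0∞`
(`∞` for the empty set). -/
def dInfDist {α : Type*} (d : α → α → ℝ) (x : α) (K : Set α) : ℝ≥0∞ :=
  ⨅ y ∈ K, ENNReal.ofReal (d x y)

/-- Membership in `W̃_p(ℝ, α)`: conditions 1) (relatively dense sets of
`(ε, D^{(d)}_p)`-almost periods) and 2) (approximate compactness of values). -/
def MemWpTilde {α : Type*} [TopologicalSpace α] (d : α → α → ℝ) (p : ℝ) (x₀ : α)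
    (f : ℝ → α) : Prop :=
  MemMp d p x₀ f ∧
  (∀ ε > 0, RelDense (APeriods d p ε f)) ∧
  (∀ ε > 0, ∀ δ > 0, ∃ K : Set α, IsCompact K ∧
      kappaW {t | ENNReal.ofReal ε ≤ dInfDist d (f t) K} < ENNReal.ofReal δ)

/-- The support of a Borel measure on a topological space. -/
def measSupport {α : Type*} [TopologicalSpace α] [MeasurableSpace α]
    (μ : Measure α) : Set α :=
  {x | ∀ V : Set α, IsOpen V → x ∈ V → 0 < μ V}

/-- `r_δ(x, μ) = inf { r > 0 : μ[U_r(x)] > δ }`. -/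
def rdelta {α : Type*} [PseudoMetricSpace α] [MeasurableSpace α]
    (x : α) (μ : Measure α) (δ : ℝ) : ℝ :=
  sInf {r : ℝ | 0 < r ∧ ENNReal.ofReal δ < μ (Metric.ball x r)}

/-- The Lévy–Prokhorov distance on Borel probability measures. -/
def lpDist {α : Type*} [MeasurableSpace α] [PseudoEMetricSpace α] :
    ProbabilityMeasure α → ProbabilityMeasure α → ℝ :=
  fun μ ν => MeasureTheory.levyProkhorovDist (μ : Measure α) (ν : Measure α)

end

/-!
For Weyl almost periodic `f`, the translation distance `N τ = D₁(f, f(· + τ))` is a seminorm on `ℝ`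
which is continuous, and totally bounded because its small values are relatively dense; `Mod f`
consists of the frequencies whose characters tend to `1` as `N → 0`.

If the seminorms `p i` together define the same topology as `N`, then the characters continuous for
`N` are generated by those continuous for the single `p i`: on the completion of `(ℝ, N)`, a compact
group, the latter separate points, so by Stone-Weierstrass and the orthogonality of characters they
exhaust all continuous characters. Points are separated by characters that occur in the expansion of
the seminorm itself, and these come from eigenfunctions of a compact convolution operator.

It remains to compare the seminorms of `f` and of the `h i ∘ f`, where the continuous maps `h i`
induce the topology of the target. Up to a set of small upper mean, the values of `f` stay in a
finite union of arbitrarily small neighbourhoods, on which closeness is controlled by finitely many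
of the `h i`. This uses completeness of the target, here that of the Lévy-Prokhorov space, whose
topology is induced by the integrals of bounded continuous functions.
-/

noncomputable section

theorem isCompact_setOfPred_dist_le {X Y Z : Type*} [TopologicalSpace X] [PseudoMetricSpace Y]
    [MetricSpace Z] (K : C(X, Y)) {S : Set Z} (hS : IsCompact S) :
    IsCompact {f : C(X, Z) | (∀ x, f x ∈ S) ∧ ∀ x y, dist (f x) (f y) ≤ dist (K x) (K y)} := by
  have continuous_of_dist_le {f : X → Z} (hf : ∀ x y, dist (f x) (f y) ≤ dist (K x) (K y)) :
      Continuous f := continuous_iff_continuousAt.2 fun x ↦ tendsto_iff_dist_tendsto_zero.2 <|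
    squeeze_zero (fun _ ↦ dist_nonneg) (fun y ↦ hf y x)
      (tendsto_iff_dist_tendsto_zero.1 K.continuous.continuousAt)
  apply ArzelaAscoli.isCompact_of_equicontinuous
  · have image_eq : ContinuousMap.toFun ''
        {f : C(X, Z) | (∀ x, f x ∈ S) ∧ ∀ x y, dist (f x) (f y) ≤ dist (K x) (K y)} =
        {f | (∀ x, f x ∈ S) ∧ ∀ x y, dist (f x) (f y) ≤ dist (K x) (K y)} := by
      ext f
      exact ⟨by rintro ⟨g, hg, rfl⟩; exact hg,
        fun hf ↦ ⟨⟨f, continuous_of_dist_le hf.2⟩, hf, rfl⟩⟩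
    rw [image_eq]
    refine (isCompact_univ_pi fun _ : X ↦ hS).of_isClosed_subset ?_ fun f hf x _ ↦ hf.1 x
    simp only [Set.ofPred_and, Set.ofPred_forall]
    exact (isClosed_iInter fun x ↦ hS.isClosed.preimage (continuous_apply x)).inter
      (isClosed_iInter fun x ↦ isClosed_iInter fun y ↦ isClosed_le (by fun_prop) (by fun_prop))
  · intro x
    rw [Metric.equicontinuousAt_iff_right]
    intro ε hε
    filter_upwards [Metric.tendsto_nhds.1 K.continuous.continuousAt ε hε] with y hy f
    exact (f.2.2 x y).trans_lt (by rwa [dist_comm])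

section CompactKernel

variable {𝕜 X H : Type*} [RCLike 𝕜] [TopologicalSpace X] [CompactSpace X]
  [NormedAddCommGroup H] [InnerProductSpace 𝕜 H]

/-- The operator `φ ↦ (x ↦ ⟪K x, φ⟫)` attached to a continuous family `K` of vectors of an inner
product space. -/
def innerCLM (K : C(X, H)) : H →L[𝕜] C(X, 𝕜) :=
  LinearMap.mkContinuous
    { toFun φ := ⟨fun x ↦ inner 𝕜 (K x) φ, by fun_prop⟩
      map_add' φ ψ := by ext x; exact inner_add_right ..
      map_smul' c φ := by ext x; exact inner_smul_right .. } ‖K‖ fun φ ↦ by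
    rw [ContinuousMap.norm_le _ (by positivity)]
    exact fun x ↦ (norm_inner_le_norm _ _).trans (by gcongr; exact K.norm_coe_le_norm x)

theorem isCompactOperator_innerCLM (K : C(X, H)) : IsCompactOperator (innerCLM (𝕜 := 𝕜) K) := by
  refine (isCompactOperator_iff_image_closedBall_subset_compact
    (innerCLM (𝕜 := 𝕜) K : H →ₗ[𝕜] C(X, 𝕜)) one_pos).2
    ⟨_, isCompact_setOfPred_dist_le K (isCompact_closedBall 0 ‖K‖), ?_⟩
  rintro _ ⟨φ, hφ, rfl⟩
  have norm_inner_le (h : H) : ‖inner 𝕜 h φ‖ ≤ ‖h‖ :=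
    (norm_inner_le_norm h φ).trans
      (mul_le_of_le_one_right (norm_nonneg h) (mem_closedBall_zero_iff.1 hφ))
  refine ⟨fun x ↦ mem_closedBall_zero_iff.2 <|
    (norm_inner_le (K x)).trans (K.norm_coe_le_norm x), fun x y ↦ ?_⟩
  rw [dist_eq_norm, dist_eq_norm]
  calc ‖inner 𝕜 (K x) φ - inner 𝕜 (K y) φ‖ = ‖inner 𝕜 (K x - K y) φ‖ := by rw [inner_sub_left]
    _ ≤ ‖K x - K y‖ := norm_inner_le _

end CompactKernel

section IntegralOperator

variable {𝕜 X : Type*} [RCLike 𝕜] [TopologicalSpace X] [CompactSpace X] [MeasurableSpace X]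
  [BorelSpace X] (ν : Measure X) [IsFiniteMeasure ν]

/-- The operator `f ↦ (x ↦ ∫ y, k (x, y) * f y ∂ν)` with continuous kernel `k`, as an operator from
`L²(ν)` to continuous functions. -/
def kernelCLM (k : C(X × X, 𝕜)) : Lp 𝕜 2 ν →L[𝕜] C(X, 𝕜) :=
  innerCLM ⟨fun x ↦ ContinuousMap.toLp 2 ν 𝕜 ((star k).curry x), by fun_prop⟩

theorem isCompactOperator_kernelCLM (k : C(X × X, 𝕜)) : IsCompactOperator (kernelCLM ν k) :=
  isCompactOperator_innerCLM _

theorem kernelCLM_toLp_apply (k : C(X × X, 𝕜)) (f : C(X, 𝕜)) (x : X) :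
    kernelCLM ν k (ContinuousMap.toLp 2 ν 𝕜 f) x = ∫ y, k (x, y) * f y ∂ν :=
  (ContinuousMap.inner_toLp ν ((star k).curry x) f).trans <|
    integral_congr_ae <| .of_forall fun y ↦ by simp [mul_comm]

variable {ν} in
theorem isSymmetric_toLp_comp_kernelCLM [NormalSpace X] [ν.WeaklyRegular] {k : C(X × X, 𝕜)}
    (hk : ∀ x y, k (y, x) = star (k (x, y))) :
    ((ContinuousMap.toLp 2 ν 𝕜).comp (kernelCLM ν k)).IsSymmetric := by
  intro φ ψ
  refine (ContinuousMap.toLp_denseRange 𝕜 ν 𝕜 (p := 2) (by simp)).induction_on₂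
    (p := fun φ ψ ↦ inner 𝕜 ((ContinuousMap.toLp 2 ν 𝕜).comp (kernelCLM ν k) φ) ψ =
      inner 𝕜 φ ((ContinuousMap.toLp 2 ν 𝕜).comp (kernelCLM ν k) ψ))
    (isClosed_eq (by fun_prop) (by fun_prop)) (fun f g ↦ ?_) φ ψ
  simp only [ContinuousLinearMap.comp_apply, ContinuousMap.inner_toLp, kernelCLM_toLp_apply,
    ← integral_conj, ← integral_const_mul, ← integral_mul_const]
  simp only [starRingEnd_apply]
  rw [integral_integral_swap_of_hasCompactSupport (by fun_prop) (.of_compactSpace _)]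
  refine integral_congr_ae <| .of_forall fun x ↦ integral_congr_ae <| .of_forall fun y ↦ ?_
  simp only [hk x y, star_mul', star_star]
  ring

theorem eq_zero_of_toLp_comp_kernelCLM_eq_zero [ν.IsOpenPosMeasure] {k : C(X × X, 𝕜)}
    (h : (ContinuousMap.toLp 2 ν 𝕜).comp (kernelCLM ν k) = 0) : k = 0 := by
  have toLp_injective := ContinuousMap.toLp_injective (E := 𝕜) (p := 2) (𝕜 := 𝕜) ν
  ext ⟨x, y⟩
  have kernelCLM_eq_zero (φ) : kernelCLM ν k φ = 0 :=
    toLp_injective (by rw [map_zero]; exact DFunLike.congr_fun h φ)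
  have row_eq_zero : (star k).curry x = 0 := toLp_injective <| by
    rw [map_zero, ← inner_self_eq_zero (𝕜 := 𝕜)]
    exact DFunLike.congr_fun (kernelCLM_eq_zero (ContinuousMap.toLp 2 ν 𝕜 ((star k).curry x))) x
  exact star_eq_zero.1 (DFunLike.congr_fun row_eq_zero y)

/-- The operator `f ↦ (x ↦ ∫ y, k (x, y) * f y ∂ν)` on continuous functions. -/
def kernelOperator (k : C(X × X, 𝕜)) : C(X, 𝕜) →L[𝕜] C(X, 𝕜) :=
  (kernelCLM ν k).comp (ContinuousMap.toLp 2 ν 𝕜)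

theorem kernelOperator_apply (k : C(X × X, 𝕜)) (f : C(X, 𝕜)) (x : X) :
    kernelOperator ν k f x = ∫ y, k (x, y) * f y ∂ν :=
  kernelCLM_toLp_apply ν k f x

theorem finiteDimensional_eigenspace_kernelOperator (k : C(X × X, 𝕜)) {m : 𝕜} (hm : m ≠ 0) :
    FiniteDimensional 𝕜 (Module.End.eigenspace (kernelOperator ν k).toLinearMap m) := by
  have isCompactOperator_smul_id := ((isCompactOperator_kernelCLM ν k).comp_clm
    (ContinuousMap.toLp 2 ν 𝕜)).restrict' ((Module.End.mem_invtSubmodule_iff_forall_mem_of_mem _).1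
      (Module.End.eigenspace_mem_invtSubmodule (kernelOperator ν k).toLinearMap m))
  rw [Module.End.restrict_eigenspace, LinearMap.coe_smul, IsCompactOperator.smul_iff₀ hm]
    at isCompactOperator_smul_id
  exact isCompactOperator_id_iff_finiteDimensional.1 isCompactOperator_smul_id

theorem exists_hasEigenvalue_kernelOperator [NormalSpace X] [ν.WeaklyRegular] [ν.IsOpenPosMeasure]
    {k : C(X × X, 𝕜)} (hk : ∀ x y, k (y, x) = star (k (x, y))) (hk₀ : k ≠ 0) :
    ∃ m ≠ 0, Module.End.HasEigenvalue (kernelOperator ν k).toLinearMap m := by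
  have exists_eigenvalue_ne_zero := mt (ContinuousLinearMap.eq_zero_of_forall_hasEigenvalue_eq_zero
    ((isCompactOperator_kernelCLM ν k).clm_comp (ContinuousMap.toLp 2 ν 𝕜))
    (isSymmetric_toLp_comp_kernelCLM hk)).1 (mt (eq_zero_of_toLp_comp_kernelCLM_eq_zero ν) hk₀)
  push Not at exists_eigenvalue_ne_zero
  obtain ⟨m, hm, hm₀⟩ := exists_eigenvalue_ne_zero
  obtain ⟨φ, hφ⟩ := hm.exists_hasEigenvector
  have toLp_kernelCLM : ContinuousMap.toLp 2 ν 𝕜 (kernelCLM ν k φ) = m • φ := hφ.apply_eq_smul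
  refine ⟨m, hm₀, Module.End.hasEigenvalue_of_hasEigenvector (x := kernelCLM ν k φ)
    (Module.End.hasEigenvector_iff.2 ⟨Module.End.mem_eigenspace_iff.2 ?_, fun h ↦ ?_⟩)⟩
  · exact (congrArg (kernelCLM ν k) toLp_kernelCLM).trans (map_smul _ m φ)
  · rw [h, map_zero] at toLp_kernelCLM
    exact smul_ne_zero hm₀ hφ.2 toLp_kernelCLM.symm

end IntegralOperator

theorem exists_ne_zero_forall_apply_eq_smul_of_commute {ι K V : Type*} [Field K] [IsAlgClosed K]
    [AddCommGroup V] [Module K V] [FiniteDimensional K V] [Nontrivial V] {f : ι → Module.End K V}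
    (hf : ∀ i j, Commute (f i) (f j)) : ∃ v ≠ 0, ∀ i, ∃ c : K, f i v = c • v := by
  obtain ⟨W, ⟨hW, W_invariant⟩, W_minimal⟩ := wellFounded_lt.has_min
    {W : Submodule K V | W ≠ ⊥ ∧ ∀ i, ∀ v ∈ W, f i v ∈ W} ⟨⊤, top_ne_bot, by simp⟩
  have exists_le_eigenspace (i) : ∃ c, W ≤ Module.End.eigenspace (f i) c := by
    have : Nontrivial W := Submodule.nontrivial_iff_ne_bot.2 hW
    obtain ⟨c, hc⟩ := Module.End.exists_eigenvalue ((f i).restrict (W_invariant i))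
    obtain ⟨w, hw⟩ := hc.exists_hasEigenvector
    refine ⟨c, inf_eq_left.1 <| inf_le_left.eq_of_not_lt <| W_minimal _ ⟨?_, fun j v hv ↦ ?_⟩⟩
    · refine Submodule.ne_bot_iff _ |>.2 ⟨w, ⟨w.2, ?_⟩, by simpa using hw.2⟩
      exact Module.End.mem_eigenspace_iff.2 (congrArg Subtype.val hw.apply_eq_smul)
    · exact ⟨W_invariant j v hv.1, Module.End.mapsTo_genEigenspace_of_comm (hf i j) c 1 hv.2⟩
  obtain ⟨v, hv, hv₀⟩ := W.ne_bot_iff.1 hW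
  exact ⟨v, hv₀, fun i ↦ (exists_le_eigenspace i).imp fun c hc ↦
    Module.End.mem_eigenspace_iff.1 (hc hv)⟩

theorem exists_hasEigenvector_forall_apply_eq_smul_of_commute {ι K V : Type*} [Field K]
    [IsAlgClosed K] [AddCommGroup V] [Module K V] {T : Module.End K V} {m : K}
    (hm : T.HasEigenvalue m) [FiniteDimensional K (T.eigenspace m)] {f : ι → Module.End K V}
    (hTf : ∀ i, Commute T (f i)) (hf : ∀ i j, Commute (f i) (f j)) :
    ∃ v, T.HasEigenvector m v ∧ ∀ i, ∃ c : K, f i v = c • v := by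
  have : Nontrivial (T.eigenspace m) := Submodule.nontrivial_iff_ne_bot.2 hm
  have f_mem (i) : ∀ v ∈ T.eigenspace m, f i v ∈ T.eigenspace m :=
    fun _ hv ↦ Module.End.mapsTo_genEigenspace_of_comm (hTf i) m 1 hv
  obtain ⟨⟨v, hv⟩, hv₀, hfv⟩ := exists_ne_zero_forall_apply_eq_smul_of_commute
    (f := fun i ↦ (f i).restrict (f_mem i)) fun i j ↦ LinearMap.restrict_commute (hf i j) _ _
  exact ⟨v, ⟨hv, fun h ↦ hv₀ (Subtype.ext h)⟩, fun i ↦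
    (hfv i).imp fun c hc ↦ congrArg Subtype.val hc⟩

section AddChar

theorem exists_addChar_eq_mul_of_translate {A : Type*} [AddCommGroup A] {f : A → ℂ} {C : ℝ}
    (hf : ∀ x, ‖f x‖ ≤ C) (hf₀ : f ≠ 0) (hf_translate : ∀ y, ∃ c, ∀ x, f (x + y) = c * f x) :
    f 0 ≠ 0 ∧ ∃ χ : AddChar A Circle, ∀ x, f x = f 0 * χ x := by
  choose c hc using hf_translate
  have apply_eq (x) : f x = c x * f 0 := by rw [← hc, zero_add]
  have hf00 : f 0 ≠ 0 := fun h ↦ hf₀ <| funext fun x ↦ by rw [apply_eq, h, mul_zero]; rfl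
  have c_zero : c 0 = 1 := by simpa [hf00] using apply_eq 0
  have c_add (x y) : c (x + y) = c x * c y := mul_right_cancel₀ hf00 <| by
    rw [← apply_eq, hc, apply_eq]; ring
  have norm_c_le (x) : ‖c x‖ ≤ 1 := by
    by_contra! hx
    have c_nsmul (n : ℕ) : c (n • x) = c x ^ n := by
      induction n with
      | zero => simp [c_zero]
      | succ n ih => rw [succ_nsmul, c_add, ih, pow_succ]
    obtain ⟨n, hn⟩ := pow_unbounded_of_one_lt (C / ‖f 0‖) hx
    rw [div_lt_iff₀ (norm_pos_iff.2 hf00), ← norm_pow, ← c_nsmul, ← norm_mul, ← apply_eq] at hn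
    exact (hf _).not_gt hn
  have norm_c (x) : ‖c x‖ = 1 := by
    have norm_mul_norm : ‖c x‖ * ‖c (-x)‖ = 1 := by
      rw [← norm_mul, ← c_add, add_neg_cancel, c_zero, norm_one]
    nlinarith [norm_c_le x, norm_c_le (-x), norm_nonneg (c x)]
  exact ⟨hf00, ⟨fun x ↦ ⟨c x, mem_sphere_zero_iff_norm.2 (norm_c x)⟩, Subtype.ext c_zero,
    fun x y ↦ Subtype.ext (c_add x y)⟩, fun x ↦ by rw [apply_eq, mul_comm]; rfl⟩

theorem integral_add_right_mul_addChar {A : Type*} [AddCommGroup A] [MeasurableSpace A]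
    [MeasurableAdd A] (ν : Measure A) [ν.IsAddRightInvariant] (f : A → ℂ) (χ : AddChar A Circle)
    (x : A) : ∫ y, f (y + x) * χ y ∂ν = χ (-x) * ∫ y, f y * χ y ∂ν := by
  rw [← integral_const_mul, ← integral_add_right_eq_self (fun y ↦ χ (-x) * (f y * (χ y : ℂ))) x]
  refine integral_congr_ae <| .of_forall fun y ↦ ?_
  have χ_eq : (χ y : ℂ) = χ (-x) * χ (y + x) := by
    rw [← Circle.coe_mul, ← AddChar.map_add_eq_mul, neg_add_cancel_comm_assoc]
  simp only [χ_eq]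
  ring

theorem integral_secondDifference_mul_addChar {A : Type*} [AddCommGroup A] [MeasurableSpace A]
    [MeasurableAdd A] {ν : Measure A} [ν.IsAddRightInvariant] {f : A → ℂ} (χ : AddChar A Circle)
    (x : A) (hf : ∀ y, Integrable (fun z ↦ f (z + y) * χ z) ν) :
    ∫ y, (f (y + x) + f (y + -x) - 2 * f y) * χ y ∂ν =
      (χ (-x) + χ x - 2) * ∫ y, f y * χ y ∂ν := by
  have integrable_add : Integrable (fun y ↦ f (y + x) * χ y + f (y + -x) * χ y) ν :=
    (hf x).add (hf (-x))
  calc ∫ y, (f (y + x) + f (y + -x) - 2 * f y) * χ y ∂ν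
    _ = ∫ y, (f (y + x) * χ y + f (y + -x) * χ y - 2 * (f (y + 0) * χ y)) ∂ν :=
      integral_congr_ae <| .of_forall fun y ↦ by
        simp only [add_zero]
        ring
    _ = (χ (-x) + χ x - 2) * ∫ y, f y * χ y ∂ν := by
      rw [integral_sub integrable_add ((hf 0).const_mul 2), integral_add (hf x) (hf (-x)),
        integral_const_mul, integral_add_right_mul_addChar, integral_add_right_mul_addChar,
        integral_add_right_mul_addChar, neg_neg, neg_zero, AddChar.map_zero_eq_one,
        Circle.coe_one]
      ring

theorem integral_addChar_eq_zero {A : Type*} [AddCommGroup A] [MeasurableSpace A]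
    [MeasurableAdd A] (ν : Measure A) [ν.IsAddRightInvariant] {χ : AddChar A Circle}
    (hχ : χ ≠ 1) : ∫ x, (χ x : ℂ) ∂ν = 0 := by
  obtain ⟨y, hy⟩ := AddChar.ne_one_iff.1 hχ
  have integral_eq_mul := integral_add_right_mul_addChar ν 1 χ (-y)
  simp only [Pi.one_apply, one_mul, neg_neg] at integral_eq_mul
  exact by_contra fun h ↦ hy (Circle.ext ((mul_eq_right₀ h).1 integral_eq_mul.symm))

end AddChar

section CompactGroup

variable {G : Type*} [AddCommGroup G] [TopologicalSpace G] [IsTopologicalAddGroup G]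

/-- Translation of functions `f ↦ f (· + z)`. -/
def translation (z : G) : Module.End ℂ C(G, ℂ) :=
  (ContinuousMap.compRightAlgHom ℂ ℂ (ContinuousMap.addRight z)).toLinearMap

theorem commute_translation (y z : G) : Commute (translation y) (translation z) :=
  LinearMap.ext fun f ↦ ContinuousMap.ext fun x ↦ congrArg f (add_right_comm x y z)

/-- The kernel `(x, y) ↦ k (y - x)` of the correlation operator with `k`. -/
def correlationKernel (k : C(G, ℂ)) : C(G × G, ℂ) :=
  k.comp ⟨fun p ↦ p.2 - p.1, by fun_prop⟩

theorem correlationKernel_apply (k : C(G, ℂ)) (x y : G) : correlationKernel k (x, y) = k (y - x) :=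
  rfl

variable [CompactSpace G]

section Haar

variable [MeasurableSpace G] [BorelSpace G] (ν : Measure G)

theorem commute_kernelOperator_translation [IsFiniteMeasure ν] [ν.IsAddRightInvariant]
    (k : C(G, ℂ)) (z : G) :
    Commute (kernelOperator ν (correlationKernel k)).toLinearMap (translation z) := by
  refine LinearMap.ext fun f ↦ ContinuousMap.ext fun x ↦ ?_
  calc kernelOperator ν (correlationKernel k) (translation z f) x
    _ = ∫ y, k (y - x) * f (y + z) ∂ν :=
      kernelOperator_apply ν (correlationKernel k) (translation z f) x
    _ = ∫ y, k (y + z - (x + z)) * f (y + z) ∂ν := by simp only [add_sub_add_right_eq_sub]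
    _ = ∫ y, k (y - (x + z)) * f y ∂ν :=
      integral_add_right_eq_self (fun y ↦ k (y - (x + z)) * f y) z
    _ = kernelOperator ν (correlationKernel k) f (x + z) :=
      (kernelOperator_apply ν (correlationKernel k) f (x + z)).symm

theorem exists_addChar_integral_ne_zero [ν.IsAddHaarMeasure] [ν.WeaklyRegular] {k : C(G, ℂ)}
    (hk : ∀ z, k (-z) = star (k z)) (hk₀ : k ≠ 0) :
    ∃ χ : AddChar G Circle, Continuous χ ∧ ∫ y, k y * χ y ∂ν ≠ 0 := by
  obtain ⟨m, hm₀, hm⟩ := exists_hasEigenvalue_kernelOperator (ν := ν) (k := correlationKernel k)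
    (fun x y ↦ by simp only [correlationKernel_apply, ← hk, neg_sub])
    (fun h ↦ hk₀ <| ContinuousMap.ext fun z ↦ by
      simpa [correlationKernel_apply] using DFunLike.congr_fun h (0, z))
  have := finiteDimensional_eigenspace_kernelOperator ν (correlationKernel k) hm₀
  obtain ⟨f, hf, hf_translation⟩ := exists_hasEigenvector_forall_apply_eq_smul_of_commute hm
    (commute_kernelOperator_translation ν k) commute_translation
  obtain ⟨hf00, χ, hχ⟩ := exists_addChar_eq_mul_of_translate f.norm_coe_le_norm
    (fun h ↦ hf.2 (DFunLike.coe_injective h))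
    fun y ↦ (hf_translation y).imp fun c hc x ↦ DFunLike.congr_fun hc x
  refine ⟨χ, continuous_induced_rng.2 <| (f.continuous.div_const (f 0)).congr fun x ↦ ?_,
    fun h ↦ ?_⟩
  · rw [hχ x, mul_div_cancel_left₀ _ hf00]; rfl
  · have integral_mul_f : ∫ y, k (y - 0) * f y ∂ν = m * f 0 :=
      (kernelOperator_apply ν (correlationKernel k) f 0).symm.trans
        (DFunLike.congr_fun hf.apply_eq_smul 0)
    refine mul_ne_zero hm₀ hf00 ?_
    rw [← integral_mul_f, ← zero_mul (f 0), ← h, ← integral_mul_const]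
    exact integral_congr_ae <| .of_forall fun y ↦ by simp only [sub_zero, hχ y]; ring

theorem norm_addChar_sub_one_mul_norm_integral_le [IsFiniteMeasure ν] [ν.IsAddRightInvariant]
    {p : AddGroupSeminorm G} (hp : Continuous p) {χ : AddChar G Circle} (hχ : Continuous χ)
    (x : G) : ‖(χ x : ℂ) - 1‖ * ‖∫ y, (p y : ℂ) * χ y ∂ν‖ ≤ ν.real Set.univ * p x := by
  have integrable (y : G) : Integrable (fun z ↦ (p (z + y) : ℂ) * χ z) ν :=
    Continuous.integrable_of_hasCompactSupport (by fun_prop) (.of_compactSpace _)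
  calc ‖(χ x : ℂ) - 1‖ * ‖∫ y, (p y : ℂ) * χ y ∂ν‖
    _ = ‖∫ y, ((p (y + -x) : ℂ) * χ y - p (y + 0) * χ y) ∂ν‖ := by
      rw [integral_sub (integrable _) (integrable 0),
        integral_add_right_mul_addChar ν (fun y ↦ (p y : ℂ)), neg_neg, ← norm_mul, sub_one_mul]
      simp only [add_zero]
    _ ≤ p x * ν.real Set.univ := norm_integral_le_of_norm_le_const <| .of_forall fun y ↦ by
      rw [← sub_mul, norm_mul, Circle.norm_coe, mul_one, ← Complex.ofReal_sub, Complex.norm_real,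
        add_zero]
      exact (abs_sub_map_le_sub p _ _).trans_eq (by rw [add_sub_cancel_left, map_neg_eq_map])
    _ = _ := mul_comm _ _

end Haar

/-- The second difference of `p` with step `x` does not vanish at `0`, so some character `χ` occurs
in its expansion; its `χ`-coefficient is that of `p` times a factor vanishing when `χ x = 1`. -/
theorem exists_addChar_apply_ne_one_of_addGroupSeminorm {p : AddGroupSeminorm G} (hp : Continuous p)
    {x : G} (hx : p x ≠ 0) :
    ∃ χ : AddChar G Circle, Continuous χ ∧ χ x ≠ 1 ∧ ∃ C : ℝ, ∀ y, ‖(χ y : ℂ) - 1‖ ≤ C * p y := by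
  let : MeasurableSpace G := borel G
  have : BorelSpace G := ⟨rfl⟩
  let ν : Measure G := Measure.addHaar
  let k : C(G, ℂ) := ⟨fun y ↦ p (y + x) + p (y + -x) - 2 * p y, by fun_prop⟩
  obtain ⟨χ, hχ, integral_k_ne_zero⟩ := exists_addChar_integral_ne_zero ν (k := k)
    (fun y ↦ by
      have p_neg_add (y z : G) : p (-y + z) = p (y + -z) := by
        rw [← map_neg_eq_map p, neg_add, neg_neg]
      simp [k, p_neg_add, add_comm (p (y + x) : ℂ)])
    (fun h ↦ hx (by simpa [k, ← two_mul] using DFunLike.congr_fun h 0))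
  have integral_k : ∫ y, k y * χ y ∂ν = (χ (-x) + χ x - 2) * ∫ y, (p y : ℂ) * χ y ∂ν :=
    integral_secondDifference_mul_addChar (f := fun y ↦ (p y : ℂ)) χ x fun y ↦
      Continuous.integrable_of_hasCompactSupport (by fun_prop) (.of_compactSpace _)
  rw [integral_k, mul_ne_zero_iff] at integral_k_ne_zero
  refine ⟨χ, hχ, fun h ↦ integral_k_ne_zero.1 ?_,
    ν.real Set.univ / ‖∫ y, (p y : ℂ) * χ y ∂ν‖, fun y ↦ ?_⟩
  · rw [AddChar.map_neg_eq_inv, h]; norm_num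
  · rw [div_mul_eq_mul_div, le_div_iff₀ (norm_pos_iff.2 integral_k_ne_zero.2)]
    exact norm_addChar_sub_one_mul_norm_integral_le ν hp hχ y

theorem topologicalClosure_span_submonoid_eq_top {X 𝕜 : Type*} [RCLike 𝕜] [TopologicalSpace X]
    [CompactSpace X] (M : Submonoid C(X, 𝕜)) (hM : ∀ f ∈ M, star f ∈ M)
    (hM_sep : ((fun f : C(X, 𝕜) ↦ (f : X → 𝕜)) '' M).SeparatesPoints) :
    (Submodule.span 𝕜 (M : Set C(X, 𝕜))).topologicalClosure = ⊤ := by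
  have star_eq : star (M : Set C(X, 𝕜)) = M :=
    Set.ext fun f ↦ ⟨fun hf ↦ star_star f ▸ hM _ hf, fun hf ↦ hM f hf⟩
  have span_eq : Submodule.span 𝕜 (M : Set C(X, 𝕜)) =
      Subalgebra.toSubmodule (StarAlgebra.adjoin 𝕜 (M : Set C(X, 𝕜))).toSubalgebra := by
    rw [StarAlgebra.adjoin_toSubalgebra, star_eq, Set.union_self, Algebra.adjoin_eq_span,
      Submonoid.closure_eq]
  have adjoin_dense := ContinuousMap.starSubalgebra_topologicalClosure_eq_top_of_separatesPoints
    (StarAlgebra.adjoin 𝕜 (M : Set C(X, 𝕜))) fun x y hxy ↦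
      (hM_sep hxy).imp fun _ ↦ .imp_left (Set.image_mono (StarAlgebra.subset_adjoin _ _) ·)
  rw [span_eq]
  exact SetLike.coe_injective (congrArg (SetLike.coe) adjoin_dense :)

/-- The submonoid of `C(G, ℂ)` formed by the continuous characters in `H`. -/
def charSubmonoid (H : Subgroup (AddChar G Circle)) : Submonoid C(G, ℂ) where
  carrier := {f | ∃ χ ∈ H, ∀ x, f x = χ x}
  one_mem' := ⟨1, H.one_mem, fun _ ↦ rfl⟩
  mul_mem' := by
    rintro f g ⟨χ, hχ, hf⟩ ⟨φ, hφ, hg⟩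
    exact ⟨χ * φ, H.mul_mem hχ hφ, fun x ↦ by
      rw [AddChar.mul_apply, Circle.coe_mul, ← hf, ← hg, ContinuousMap.mul_apply]⟩

theorem topologicalClosure_span_charSubmonoid {H : Subgroup (AddChar G Circle)}
    (hH : ∀ x ≠ 0, ∃ χ ∈ H, Continuous χ ∧ χ x ≠ 1) :
    (Submodule.span ℂ (charSubmonoid H : Set C(G, ℂ))).topologicalClosure = ⊤ := by
  refine topologicalClosure_span_submonoid_eq_top _ ?_ fun x y hxy ↦ ?_
  · rintro f ⟨χ, hχ, hf⟩
    exact ⟨χ⁻¹, H.inv_mem hχ, fun x ↦ by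
      rw [AddChar.inv_apply', Circle.coe_inv_eq_conj, ← hf]; rfl⟩
  · obtain ⟨χ, hχ, hχ_cont, hχ_ne⟩ := hH (x - y) (sub_ne_zero.2 hxy)
    refine ⟨_, ⟨⟨fun x ↦ χ x, by fun_prop⟩, ⟨χ, hχ, fun _ ↦ rfl⟩, rfl⟩, fun h ↦ hχ_ne ?_⟩
    rw [AddChar.map_sub_eq_div, Circle.ext h, div_self']

/-- If `ψ ∉ H`, then `ψ` is orthogonal in `L²` to the characters in `H`, hence to everything. -/
theorem mem_of_forall_exists_apply_ne_one {H : Subgroup (AddChar G Circle)}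
    (hH : ∀ x ≠ 0, ∃ χ ∈ H, Continuous χ ∧ χ x ≠ 1) {ψ : AddChar G Circle} (hψ : Continuous ψ) :
    ψ ∈ H := by
  let : MeasurableSpace G := borel G
  have : BorelSpace G := ⟨rfl⟩
  let ν : Measure G := Measure.addHaar
  let L : C(G, ℂ) →L[ℂ] ℂ :=
    (innerSL ℂ (ContinuousMap.toLp 2 ν ℂ ⟨fun x ↦ (ψ x : ℂ), by fun_prop⟩)).comp
      (ContinuousMap.toLp 2 ν ℂ)
  have L_apply (f) : L f = ∫ x, f x * (ψ⁻¹ x : Circle) ∂ν := by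
    simp only [AddChar.inv_apply', Circle.coe_inv_eq_conj]
    exact ContinuousMap.inner_toLp ν _ f
  by_contra hψH
  have span_le_ker : Submodule.span ℂ (charSubmonoid H : Set C(G, ℂ)) ≤ L.ker := by
    refine Submodule.span_le.2 ?_
    rintro f ⟨χ, hχ, hf⟩
    have := integral_addChar_eq_zero ν (χ := χ * ψ⁻¹) fun h ↦ hψH (mul_inv_eq_one.1 h ▸ hχ)
    simp only [AddChar.mul_apply, Circle.coe_mul, ← hf] at this
    exact (L_apply f).trans this
  have top_le_ker := Submodule.topologicalClosure_minimal _ span_le_ker L.isClosed_ker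
  rw [topologicalClosure_span_charSubmonoid hH] at top_le_ker
  have integral_ψ : L ⟨fun x ↦ (ψ x : ℂ), by fun_prop⟩ = ν.real Set.univ := by
    simp [L_apply, ← Circle.coe_mul, ← AddChar.mul_apply, -AddChar.inv_apply]
  have : ν.real Set.univ = 0 := by exact_mod_cast integral_ψ.symm.trans (top_le_ker trivial)
  exact measureReal_univ_pos.ne' this

end CompactGroup

section Completion

open UniformSpace

theorem compactSpace_completion_of_totallyBounded {α : Type*} [UniformSpace α]
    (h : TotallyBounded (Set.univ : Set α)) : CompactSpace (Completion α) := by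
  have dense := (Completion.denseRange_coe (α := α)).closure_range
  rw [← Set.image_univ] at dense
  refine isCompact_univ_iff.1 (isCompact_iff_totallyBounded_isComplete.2 ⟨?_, isComplete_univ⟩)
  exact dense ▸ (h.image (Completion.uniformContinuous_coe α)).closure

variable {A : Type*} [SeminormedAddCommGroup A]

theorem uniformContinuous_addGroupSeminorm_of_tendsto {p : AddGroupSeminorm A}
    (hp : Tendsto p (𝓝 0) (𝓝 0)) : UniformContinuous p := by
  refine Metric.uniformContinuous_iff.2 fun ε hε ↦ ?_
  obtain ⟨δ, hδ, hp⟩ := Metric.tendsto_nhds_nhds.1 hp ε hε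
  refine ⟨δ, hδ, fun x y hxy ↦ (abs_sub_map_le_sub p x y).trans_lt ?_⟩
  have := hp (x := x - y) (by rwa [dist_zero_right, ← dist_eq_norm])
  rwa [dist_zero_right, Real.norm_of_nonneg (apply_nonneg p _)] at this

/-- The continuous extension of a uniformly continuous seminorm to the completion. -/
def extendSeminorm (p : AddGroupSeminorm A) (hp : UniformContinuous p) :
    AddGroupSeminorm (Completion A) where
  toFun := Completion.extension p
  map_zero' := by
    rw [← Completion.coe_zero, Completion.extension_coe hp, map_zero]
  add_le' x y := by
    have := Completion.continuous_extension (f := p)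
    refine Completion.induction_on₂ x y (isClosed_le (by fun_prop) (by fun_prop)) fun a b ↦ ?_
    simpa only [← Completion.coe_add, Completion.extension_coe hp] using map_add_le_add p a b
  neg' x := by
    have := Completion.continuous_extension (f := p)
    refine Completion.induction_on x (isClosed_eq (by fun_prop) (by fun_prop)) fun a ↦ ?_
    simp only [← Completion.coe_neg, Completion.extension_coe hp, map_neg_eq_map]

theorem continuous_extendSeminorm {p : AddGroupSeminorm A} (hp : UniformContinuous p) :
    Continuous (extendSeminorm p hp) :=
  Completion.continuous_extension

theorem extendSeminorm_coe {p : AddGroupSeminorm A} (hp : UniformContinuous p) (a : A) :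
    extendSeminorm p hp a = p a :=
  Completion.extension_coe hp a

theorem exists_continuous_addChar_apply_coe {ψ : AddChar A Circle} (hψ : Continuous ψ) :
    ∃ Ψ : AddChar (Completion A) Circle, Continuous Ψ ∧ ∀ a : A, Ψ a = ψ a := by
  let ψ' : A →+ Additive Circle := ψ.toAddMonoidHom
  exact ⟨AddChar.toAddMonoidHomEquiv.symm (ψ'.extension hψ), ψ'.continuous_extension hψ,
    ψ'.extension_coe hψ⟩

theorem exists_extendSeminorm_ne_zero {ι : Type*} {p : ι → AddGroupSeminorm A}
    (hp : ∀ i, UniformContinuous (p i)) (h : ⨅ i, comap (p i) (𝓝 0) ≤ 𝓝 0) {x : Completion A}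
    (hx : x ≠ 0) : ∃ i, extendSeminorm (p i) (hp i) x ≠ 0 := by
  by_contra! hp_zero
  have neBot : (comap (↑) (𝓝 x) : Filter A).NeBot :=
    Completion.isDenseInducing_coe.comap_nhds_neBot x
  have tendsto_zero : Tendsto id (comap (↑) (𝓝 x)) (𝓝 (0 : A)) := by
    refine Tendsto.mono_right (tendsto_iInf.2 fun i ↦ tendsto_comap_iff.2 ?_) h
    have := (continuous_extendSeminorm (hp i)).tendsto x
    rw [hp_zero i] at this
    exact (this.comp tendsto_comap).congr (extendSeminorm_coe (hp i))
  refine hx (tendsto_nhds_unique (f := ((↑) : A → Completion A)) tendsto_comap ?_)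
  exact ((Completion.continuous_coe A).tendsto 0).comp tendsto_zero

end Completion

section CharGroup

variable {A : Type*} [AddCommGroup A]

/-- The characters of `A` that tend to `1` where the seminorm `N` tends to `0`. -/
def charGroup (N : AddGroupSeminorm A) : Subgroup (AddChar A Circle) where
  carrier := {χ | Tendsto χ (comap N (𝓝 0)) (𝓝 1)}
  one_mem' := tendsto_const_nhds
  mul_mem' {χ φ} hχ hφ := by simpa using! Tendsto.mul hχ hφ
  inv_mem' {χ} (hχ : Tendsto χ _ _) :=
    (inv_one (G := Circle) ▸ hχ.inv).congr fun x ↦ (AddChar.inv_apply' χ x).symm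

theorem mem_charGroup {N : AddGroupSeminorm A} {χ : AddChar A Circle} :
    χ ∈ charGroup N ↔ Tendsto χ (comap N (𝓝 0)) (𝓝 1) :=
  Iff.rfl

theorem continuous_of_mem_charGroup [TopologicalSpace A] [IsTopologicalAddGroup A]
    {N : AddGroupSeminorm A} (hN : Tendsto N (𝓝 0) (𝓝 0)) {χ : AddChar A Circle}
    (hχ : χ ∈ charGroup N) : Continuous χ := by
  have tendsto_χ : Tendsto χ (𝓝 0) (𝓝 1) := (mem_charGroup.1 hχ).mono_left (tendsto_iff_comap.1 hN)
  rw [← AddChar.map_zero_eq_one χ] at tendsto_χ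
  exact continuous_of_continuousAt_zero χ.toAddMonoidHom tendsto_χ

theorem mem_charGroup_of_norm_sub_one_le {p : AddGroupSeminorm A} {χ : AddChar A Circle} {C : ℝ}
    (h : ∀ x, ‖(χ x : ℂ) - 1‖ ≤ C * p x) : χ ∈ charGroup p := by
  refine tendsto_iff_dist_tendsto_zero.2 <|
    squeeze_zero (fun _ ↦ dist_nonneg) (fun x ↦ (dist_eq_norm (χ x : ℂ) 1).trans_le (h x)) ?_
  simpa using (tendsto_comap (f := p) (x := 𝓝 0)).const_mul C

/-- The completion of `A` is a compact group, on which the seminorms `p i` together separate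
points. -/
theorem mem_iSup_charGroup_of_continuous {A ι : Type*} [SeminormedAddCommGroup A]
    (hA : TotallyBounded (Set.univ : Set A)) {p : ι → AddGroupSeminorm A}
    (h : 𝓝 0 = ⨅ i, comap (p i) (𝓝 0)) {ψ : AddChar A Circle} (hψ : Continuous ψ) :
    ψ ∈ ⨆ i, charGroup (p i) := by
  have hp (i) : UniformContinuous (p i) :=
    uniformContinuous_addGroupSeminorm_of_tendsto (tendsto_iff_comap.2 (h.trans_le (iInf_le _ i)))
  have := compactSpace_completion_of_totallyBounded hA
  let restrict : AddChar (UniformSpace.Completion A) Circle →* AddChar A Circle :=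
    { toFun Χ := Χ.compAddMonoidHom UniformSpace.Completion.toCompl
      map_one' := rfl
      map_mul' _ _ := rfl }
  obtain ⟨Ψ, hΨ, hΨψ⟩ := exists_continuous_addChar_apply_coe hψ
  have Ψ_mem : Ψ ∈ (⨆ i, charGroup (p i)).comap restrict := by
    refine mem_of_forall_exists_apply_ne_one (fun x hx ↦ ?_) hΨ
    obtain ⟨i, hi⟩ := exists_extendSeminorm_ne_zero hp h.ge hx
    obtain ⟨χ, hχ, hχx, C, hC⟩ :=
      exists_addChar_apply_ne_one_of_addGroupSeminorm (continuous_extendSeminorm (hp i)) hi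
    refine ⟨χ, Subgroup.mem_iSup_of_mem i ?_, hχ, hχx⟩
    exact mem_charGroup_of_norm_sub_one_le fun a ↦ extendSeminorm_coe (hp i) a ▸ hC a
  have restrict_Ψ : restrict Ψ = ψ := DFunLike.ext _ _ hΨψ
  exact restrict_Ψ ▸ Ψ_mem

theorem charGroup_eq_iSup {ι : Type*} {N : AddGroupSeminorm A} {p : ι → AddGroupSeminorm A}
    (hN : ∀ ε > 0, ∃ s : Set A, s.Finite ∧ ∀ x, ∃ a ∈ s, N (x - a) < ε)
    (h : comap N (𝓝 0) = ⨅ i, comap (p i) (𝓝 0)) : charGroup N = ⨆ i, charGroup (p i) := by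
  refine le_antisymm (fun ψ hψ ↦ ?_) (iSup_le fun i _ hχ ↦
    Tendsto.mono_left (mem_charGroup.1 hχ) (h.trans_le (iInf_le _ i)))
  let : SeminormedAddCommGroup A := N.toSeminormedAddCommGroup
  have comap_eq : comap N (𝓝 0) = 𝓝 0 := comap_norm_nhds_zero
  have totallyBounded : TotallyBounded (Set.univ : Set A) :=
    Metric.totallyBounded_iff.2 fun ε hε ↦ (hN ε hε).imp fun s ⟨hs, hs_cover⟩ ↦
      ⟨hs, fun x _ ↦ by simpa [dist_eq_norm] using! hs_cover x⟩
  exact mem_iSup_charGroup_of_continuous totallyBounded (comap_eq ▸ h)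
    (continuous_of_mem_charGroup (N := N) (tendsto_iff_comap.2 comap_eq.ge) hψ)

end CharGroup

section Real

theorem exists_continuousLinearMap_addChar_eq_exp {E : Type*} [AddCommGroup E] [Module ℝ E]
    [TopologicalSpace E] [IsTopologicalAddGroup E] [ContinuousSMul ℝ E] [LocallyConvexSpace ℝ E]
    {χ : AddChar E Circle} (hχ : Continuous χ) : ∃ L : E →L[ℝ] ℝ, ∀ x, χ x = Circle.exp (L x) := by
  obtain ⟨g, ⟨g_zero, hg⟩, -⟩ := Circle.isCoveringMap_exp.existsUnique_continuousMap_lifts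
    ⟨χ, hχ⟩ 0 0 (by simp)
  have exp_g (x : E) : Circle.exp (g x) = χ x := congrFun hg x
  have g_add (x y : E) : g (x + y) = g x + g y := by
    refine congrFun (Circle.isCoveringMap_exp.eq_of_comp_eq
      (g₁ := fun y ↦ g (x + y)) (g₂ := fun y ↦ g x + g y) (by fun_prop) (by fun_prop)
      (funext fun y ↦ ?_) 0 (by simp [g_zero])) y
    simp only [Function.comp_apply, Circle.exp_add, exp_g, AddChar.map_add_eq_mul]
  exact ⟨(AddMonoidHom.mk' g g_add).toRealLinearMap g.continuous, fun x ↦ (exp_g x).symm⟩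

/-- The parametrization `l ↦ (t ↦ exp (i l t))` of the continuous characters of `ℝ`. -/
def frequencyChar : Multiplicative ℝ →* AddChar ℝ Circle where
  toFun l := Real.probChar.mulShift l.toAdd
  map_one' := Real.probChar.mulShift_zero
  map_mul' _ _ := (Real.probChar.mulShift_mul _ _).symm

theorem frequencyChar_injective : Function.Injective frequencyChar := by
  have mulShift_injective : Function.Injective Real.probChar.mulShift :=
    AddChar.to_mulShift_inj_of_isPrimitive (AddChar.IsPrimitive.of_ne_one Real.probChar_ne_one)
  exact mulShift_injective

theorem mem_range_frequencyChar {χ : AddChar ℝ Circle} (hχ : Continuous χ) :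
    χ ∈ frequencyChar.range := by
  obtain ⟨L, hL⟩ := exists_continuousLinearMap_addChar_eq_exp hχ
  refine ⟨.ofAdd (L 1), DFunLike.ext _ _ fun t ↦ ?_⟩
  have L_apply : L t = L 1 * t := by rw [mul_comm, ← smul_eq_mul, ← map_smul, smul_eq_mul, mul_one]
  rw [hL, L_apply]
  rfl

/-- The frequencies `l` for which `exp (i l t) → 1` as `N t → 0`. -/
def frequencyModule (N : AddGroupSeminorm ℝ) : AddSubgroup ℝ :=
  Subgroup.toAddSubgroup' ((charGroup N).comap frequencyChar)

theorem mem_frequencyModule_iff_seq {N : AddGroupSeminorm ℝ} {l : ℝ} :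
    l ∈ frequencyModule N ↔ ∀ τ : ℕ → ℝ, Tendsto (fun j ↦ N (τ j)) atTop (𝓝 0) →
      Tendsto (fun j ↦ Complex.exp (Complex.I * ((l * τ j : ℝ) : ℂ))) atTop (𝓝 1) := by
  have mem_iff : l ∈ frequencyModule N ↔ Tendsto (Real.probChar.mulShift l) (comap N (𝓝 0)) (𝓝 1) :=
    Iff.rfl
  rw [mem_iff, tendsto_iff_seq_tendsto]
  refine forall_congr' fun τ ↦ imp_congr tendsto_comap_iff ?_
  have isInducing_coe : IsInducing ((↑) : Circle → ℂ) := ⟨rfl⟩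
  refine isInducing_coe.tendsto_nhds_iff.trans (iff_of_eq ?_)
  refine congrArg (Tendsto · _ _) (funext fun j ↦ ?_)
  rw [mul_comm]
  rfl

theorem frequencyModule_eq_iSup {ι : Type*} {N : AddGroupSeminorm ℝ} {p : ι → AddGroupSeminorm ℝ}
    (hN_tendsto : Tendsto N (𝓝 0) (𝓝 0))
    (hN : ∀ ε > 0, ∃ s : Set ℝ, s.Finite ∧ ∀ x, ∃ a ∈ s, N (x - a) < ε)
    (h : comap N (𝓝 0) = ⨅ i, comap (p i) (𝓝 0)) :
    frequencyModule N = ⨆ i, frequencyModule (p i) := by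
  have tendsto_p (i) : Tendsto (p i) (𝓝 0) (𝓝 0) :=
    tendsto_iff_comap.2 ((tendsto_iff_comap.1 hN_tendsto).trans (h.trans_le (iInf_le _ i)))
  have map_comap (i) :
      ((charGroup (p i)).comap frequencyChar).map frequencyChar = charGroup (p i) :=
    Subgroup.map_comap_eq_self fun χ hχ ↦
      mem_range_frequencyChar (continuous_of_mem_charGroup (tendsto_p i) hχ)
  simp only [frequencyModule, ← OrderIso.map_iSup]
  rw [charGroup_eq_iSup hN h, ← iSup_congr map_comap, ← Subgroup.map_iSup,
    Subgroup.comap_map_eq_self_of_injective frequencyChar_injective]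

end Real

section Mean

theorem limsup_add_le_limsup_add_limsup {ι : Type*} {l : Filter ι} (u v : ι → ℝ≥0∞) :
    limsup (fun i ↦ u i + v i) l ≤ limsup u l + limsup v l := by
  refine ENNReal.le_of_forall_pos_le_add fun ε hε h_lt_top ↦ ?_
  have hε₂ : (ε / 2 : ℝ≥0∞) ≠ 0 := by simpa using hε.ne'
  obtain ⟨hu, hv⟩ := ENNReal.add_lt_top.1 h_lt_top
  refine limsup_le_of_le (by isBoundedDefault) ?_
  filter_upwards [eventually_lt_of_limsup_lt (ENNReal.lt_add_right hu.ne hε₂),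
    eventually_lt_of_limsup_lt (ENNReal.lt_add_right hv.ne hε₂)] with i hui hvi
  calc u i + v i ≤ (limsup u l + ε / 2) + (limsup v l + ε / 2) := add_le_add hui.le hvi.le
    _ = limsup u l + limsup v l + ε := by rw [add_add_add_comm, ENNReal.add_halves]

/-- The supremum of the means of `θ` over the windows `[ξ, ξ + l]` of length `l`. -/
def windowMean (l : ℝ) (θ : ℝ → ℝ≥0∞) : ℝ≥0∞ :=
  ⨆ ξ : ℝ, ENNReal.ofReal (1 / l) * ∫⁻ t in Set.Icc ξ (ξ + l), θ t

/-- The upper Weyl mean, of which the Weyl semimetric of order `1` is a special case. -/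
def upperMean (θ : ℝ → ℝ≥0∞) : ℝ≥0∞ :=
  limsup (fun l ↦ windowMean l θ) atTop

theorem weylD_one_eq_windowMean {α : Type*} (d : α → α → ℝ) (l : ℝ) (f g : ℝ → α) :
    weylD d 1 l f g = windowMean l fun t ↦ ENNReal.ofReal (d (f t) (g t)) := by
  simp only [weylD, windowMean, Real.rpow_one, div_one, ENNReal.rpow_one]

theorem weylDinf_one_eq_upperMean {α : Type*} (d : α → α → ℝ) (f g : ℝ → α) :
    weylDinf d 1 f g = upperMean fun t ↦ ENNReal.ofReal (d (f t) (g t)) := by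
  simp only [weylDinf, upperMean, weylD_one_eq_windowMean]

variable {θ θ' : ℝ → ℝ≥0∞} {l : ℝ}

theorem windowMean_mono (h : θ ≤ᵐ[volume] θ') : windowMean l θ ≤ windowMean l θ' :=
  iSup_mono fun _ ↦ mul_le_mul_right (lintegral_mono_ae (ae_restrict_of_ae h)) _

theorem upperMean_mono (h : θ ≤ᵐ[volume] θ') : upperMean θ ≤ upperMean θ' :=
  limsup_le_limsup (.of_forall fun _ ↦ windowMean_mono h)

theorem windowMean_add_le (hθ : AEMeasurable θ) (θ' : ℝ → ℝ≥0∞) :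
    windowMean l (fun t ↦ θ t + θ' t) ≤ windowMean l θ + windowMean l θ' := by
  refine iSup_le fun ξ ↦ ?_
  rw [lintegral_add_left' hθ.restrict, mul_add]
  exact add_le_add (le_iSup_of_le ξ le_rfl) (le_iSup_of_le ξ le_rfl)

theorem upperMean_add_le (hθ : AEMeasurable θ) (θ' : ℝ → ℝ≥0∞) :
    upperMean (fun t ↦ θ t + θ' t) ≤ upperMean θ + upperMean θ' :=
  (limsup_le_limsup (.of_forall fun _ ↦ windowMean_add_le hθ θ')).trans
    (limsup_add_le_limsup_add_limsup _ _)

theorem upperMean_const_mul {c : ℝ≥0∞} (hc : c ≠ ⊤) (θ : ℝ → ℝ≥0∞) :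
    upperMean (fun t ↦ c * θ t) = c * upperMean θ := by
  simp only [upperMean, windowMean, lintegral_const_mul' _ _ hc, mul_left_comm _ c,
    ← ENNReal.mul_iSup]
  exact ENNReal.limsup_const_mul_of_ne_top hc

theorem windowMean_const (hl : 0 < l) (c : ℝ≥0∞) : windowMean l (fun _ ↦ c) = c := by
  have mul_eq_one : ENNReal.ofReal (1 / l) * ENNReal.ofReal l = 1 := by
    rw [← ENNReal.ofReal_mul (by positivity), one_div_mul_cancel hl.ne', ENNReal.ofReal_one]
  simp only [windowMean, setLIntegral_const, Real.volume_Icc, add_sub_cancel_left, iSup_const]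
  rw [mul_left_comm, mul_eq_one, mul_one]

theorem upperMean_const (c : ℝ≥0∞) : upperMean (fun _ ↦ c) = c := by
  have windowMean_eq : (windowMean · fun _ ↦ c) =ᶠ[atTop] fun _ ↦ c :=
    (eventually_gt_atTop 0).mono fun l hl ↦ windowMean_const hl c
  rw [upperMean, limsup_congr windowMean_eq, limsup_const]

theorem upperMean_finset_sum_le {ι : Type*} (s : Finset ι) {θ : ι → ℝ → ℝ≥0∞}
    (hθ : ∀ i, AEMeasurable (θ i)) :
    upperMean (fun t ↦ ∑ i ∈ s, θ i t) ≤ ∑ i ∈ s, upperMean (θ i) := by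
  classical
  induction s using Finset.induction_on with
  | empty => simp [upperMean_const]
  | insert i s hi ih =>
    simp only [Finset.sum_insert hi]
    exact (upperMean_add_le (hθ i) _).trans (add_le_add le_rfl ih)

theorem setLIntegral_Icc_comp_add_right (θ : ℝ → ℝ≥0∞) (s a b : ℝ) :
    ∫⁻ t in Set.Icc a b, θ (t + s) = ∫⁻ t in Set.Icc (a + s) (b + s), θ t := by
  have := (measurePreserving_add_right (volume : Measure ℝ) s).setLIntegral_comp_preimage_emb
    (MeasurableEquiv.addRight s).measurableEmbedding θ (Set.Icc (a + s) (b + s))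
  rwa [Set.preimage_add_const_Icc, add_sub_cancel_right, add_sub_cancel_right] at this

theorem windowMean_comp_add_right (l : ℝ) (θ : ℝ → ℝ≥0∞) (s : ℝ) :
    windowMean l (fun t ↦ θ (t + s)) = windowMean l θ :=
  (Equiv.addRight s).iSup_congr fun ξ ↦ by
    rw [setLIntegral_Icc_comp_add_right, Equiv.coe_addRight, add_right_comm]

theorem upperMean_comp_add_right (θ : ℝ → ℝ≥0∞) (s : ℝ) :
    upperMean (fun t ↦ θ (t + s)) = upperMean θ := by
  simp only [upperMean, windowMean_comp_add_right]

theorem setLIntegral_Icc_le_mul_windowMean (hl : 0 < l) (θ : ℝ → ℝ≥0∞) (ξ : ℝ) :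
    ∫⁻ t in Set.Icc ξ (ξ + l), θ t ≤ ENNReal.ofReal l * windowMean l θ := by
  have mul_eq_one : ENNReal.ofReal l * ENNReal.ofReal (1 / l) = 1 := by
    rw [← ENNReal.ofReal_mul hl.le, mul_one_div_cancel hl.ne', ENNReal.ofReal_one]
  rw [windowMean, ENNReal.mul_iSup]
  refine le_iSup_of_le ξ ?_
  rw [← mul_assoc, mul_eq_one, one_mul]

theorem setLIntegral_Icc_nat_mul_le_mul_windowMean (hl : 0 < l) (θ : ℝ → ℝ≥0∞) (ξ : ℝ) (n : ℕ) :
    ∫⁻ t in Set.Icc ξ (ξ + n * l), θ t ≤ n * (ENNReal.ofReal l * windowMean l θ) := by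
  induction n with
  | zero => simp
  | succ n ih =>
    have union_eq : Set.Icc ξ (ξ + (n + 1 : ℕ) * l) =
        Set.Icc ξ (ξ + n * l) ∪ Set.Icc (ξ + n * l) (ξ + n * l + l) := by
      have : 0 ≤ n * l := by positivity
      rw [Set.Icc_union_Icc_eq_Icc (by linarith) (by linarith), Nat.cast_succ, add_one_mul,
        add_assoc]
    rw [union_eq, Nat.cast_succ, add_one_mul]
    exact (lintegral_union_le _ _ _).trans
      (add_le_add ih (setLIntegral_Icc_le_mul_windowMean hl θ _))

theorem windowMean_le_two_mul_windowMean (hl : 0 < l) {L : ℝ} (hL : l ≤ L) (θ : ℝ → ℝ≥0∞) :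
    windowMean L θ ≤ 2 * windowMean l θ := by
  have hL_pos : 0 < L := hl.trans_le hL
  have le_mul : L ≤ ⌈L / l⌉₊ * l := (div_le_iff₀ hl).1 (Nat.le_ceil _)
  have mul_le : ⌈L / l⌉₊ * l ≤ 2 * L := by
    have := (mul_lt_mul_iff_left₀ hl).2 (Nat.ceil_lt_add_one (div_nonneg hL_pos.le hl.le))
    rw [add_one_mul, div_mul_cancel₀ _ hl.ne'] at this
    linarith
  refine iSup_le fun ξ ↦ ?_
  calc ENNReal.ofReal (1 / L) * ∫⁻ t in Set.Icc ξ (ξ + L), θ t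
      ≤ ENNReal.ofReal (1 / L) * ∫⁻ t in Set.Icc ξ (ξ + ⌈L / l⌉₊ * l), θ t := by
        gcongr
    _ ≤ ENNReal.ofReal (1 / L) * (⌈L / l⌉₊ * (ENNReal.ofReal l * windowMean l θ)) := by
        gcongr
        exact setLIntegral_Icc_nat_mul_le_mul_windowMean hl θ ξ _
    _ = ENNReal.ofReal (1 / L * (⌈L / l⌉₊ * l)) * windowMean l θ := by
        rw [ENNReal.ofReal_mul (by positivity), ENNReal.ofReal_mul (by positivity),
          ENNReal.ofReal_natCast, mul_assoc, mul_assoc]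
    _ ≤ 2 * windowMean l θ := by
        gcongr
        rw [one_div_mul_eq_div, ← ENNReal.ofReal_ofNat 2]
        exact ENNReal.ofReal_le_ofReal ((div_le_iff₀ hL_pos).2 mul_le)

theorem upperMean_le_two_mul_windowMean (hl : 0 < l) (θ : ℝ → ℝ≥0∞) :
    upperMean θ ≤ 2 * windowMean l θ :=
  limsup_le_of_le (by isBoundedDefault) <|
    (eventually_ge_atTop l).mono fun _ hL ↦ windowMean_le_two_mul_windowMean hl hL θ

/-- Every window can be moved into `[0, a + l]` by a shift from the relatively dense set `T`. -/
theorem upperMean_le_of_forall_mem_le_comp_add {T : Set ℝ} {a : ℝ} {c : ℝ≥0∞} (hl : 0 < l)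
    (hT : ∀ ξ, (Set.Icc ξ (ξ + a) ∩ T).Nonempty)
    (h : ∀ σ ∈ T, ∃ η : ℝ → ℝ≥0∞, AEMeasurable η ∧ windowMean l η ≤ c ∧
      ∀ t, θ t ≤ η t + θ' (t + σ)) :
    upperMean θ ≤ 2 * (c + ENNReal.ofReal (1 / l) * ∫⁻ t in Set.Icc 0 (a + l), θ' t) := by
  refine (upperMean_le_two_mul_windowMean hl θ).trans ?_
  gcongr
  refine iSup_le fun ξ ↦ ?_
  obtain ⟨σ, hσ, hσT⟩ := hT (-ξ)
  obtain ⟨η, hη, hηc, hθ⟩ := h σ hσT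
  calc ENNReal.ofReal (1 / l) * ∫⁻ t in Set.Icc ξ (ξ + l), θ t
      ≤ ENNReal.ofReal (1 / l) * ∫⁻ t in Set.Icc ξ (ξ + l), (η t + θ' (t + σ)) := by
        gcongr
        exact hθ _
    _ = ENNReal.ofReal (1 / l) * (∫⁻ t in Set.Icc ξ (ξ + l), η t) +
          ENNReal.ofReal (1 / l) * ∫⁻ t in Set.Icc (ξ + σ) (ξ + l + σ), θ' t := by
        rw [lintegral_add_left' hη.restrict, mul_add, setLIntegral_Icc_comp_add_right]
    _ ≤ c + ENNReal.ofReal (1 / l) * ∫⁻ t in Set.Icc 0 (a + l), θ' t := by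
        refine add_le_add ((le_iSup_of_le ξ le_rfl).trans hηc) <|
          mul_le_mul_right (lintegral_mono_set (Set.Icc_subset_Icc ?_ ?_)) _
        · linarith [hσ.1]
        · linarith [hσ.2]

end Mean

section TruncatedDistance

variable {V : Type*} [PseudoMetricSpace V]

/-- The `ℝ≥0∞`-valued version of `bdist`, see `ofReal_bdist`. -/
def bedist (x y : V) : ℝ≥0∞ :=
  min 1 (edist x y)

theorem bedist_le_one (x y : V) : bedist x y ≤ 1 :=
  min_le_left _ _

theorem bedist_self (x : V) : bedist x x = 0 := by
  rw [bedist, edist_self, min_zero]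

theorem bedist_comm (x y : V) : bedist x y = bedist y x := by
  rw [bedist, edist_comm, bedist]

theorem bedist_triangle (x y z : V) : bedist x z ≤ bedist x y + bedist y z := by
  simp only [bedist, ← min_add_add_left, ← min_add_add_right]
  refine le_min (le_min ?_ ?_) (le_min ?_ ?_)
  · exact (min_le_left _ _).trans le_self_add
  · exact (min_le_left _ _).trans le_add_self
  · exact (min_le_left _ _).trans le_self_add
  · exact (min_le_right _ _).trans (edist_triangle x y z)

theorem aemeasurable_bedist {f g : ℝ → V} (hf : AEStronglyMeasurable f)
    (hg : AEStronglyMeasurable g) : AEMeasurable fun t ↦ bedist (f t) (g t) :=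
  aemeasurable_const.min (hf.edist hg)

theorem ofReal_bdist (x y : V) :
    ENNReal.ofReal (bdist x y) = bedist x y := by
  rw [bdist, bedist, ENNReal.ofReal_min, ENNReal.ofReal_one, edist_dist]

end TruncatedDistance

section TranslationContinuity

theorem tendsto_measure_symmDiff_preimage_add_right {G : Type*} [AddGroup G] [TopologicalSpace G]
    [ContinuousAdd G] [R1Space G] [MeasurableSpace G] [BorelSpace G] (ν : Measure G)
    [ν.IsAddRightInvariant] [ν.InnerRegularCompactLTTop] [IsLocallyFiniteMeasure ν] {s : Set G}
    (hs : MeasurableSet s) (hνs : ν s ≠ ⊤) :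
    Tendsto (fun τ ↦ ν (symmDiff ((· + τ) ⁻¹' s) s)) (𝓝 0) (𝓝 0) := by
  let translate : C(G, C(G, G)) := ContinuousMap.curry ⟨fun p : G × G ↦ p.2 + p.1, by fun_prop⟩
  have translate_zero : translate 0 = ContinuousMap.id G := ContinuousMap.ext add_zero
  have tendsto_translate := translate.continuous.tendsto 0
  rw [translate_zero] at tendsto_translate
  refine (tendsto_measure_symmDiff_preimage_nhds_zero tendsto_translate
    (.of_forall (measurePreserving_add_right ν)) (.id ν) hs.nullMeasurableSet hνs).congr
    fun τ ↦ ?_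
  rfl

variable {V : Type*} [PseudoMetricSpace V]

theorem exists_simpleFunc_lintegral_bedist_le {α : Type*} [MeasurableSpace α] {ν : Measure α}
    [IsFiniteMeasure ν] {f : α → V} (hf : AEStronglyMeasurable f ν) {ε : ℝ≥0∞} (hε : ε ≠ 0) :
    ∃ s : SimpleFunc α V, ∫⁻ t, bedist (f t) (s t) ∂ν ≤ ε := by
  obtain ⟨g, hg, hfg⟩ := hf
  have tendsto_lintegral : Tendsto (fun n ↦ ∫⁻ t, bedist (g t) (hg.approx n t) ∂ν) atTop
      (𝓝 (∫⁻ _, 0 ∂ν)) := by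
    refine tendsto_lintegral_of_dominated_convergence' 1
      (fun n ↦ aemeasurable_const.min (hg.edist (hg.approx n).stronglyMeasurable).aemeasurable)
      (fun n ↦ .of_forall fun t ↦ bedist_le_one _ _) (by simp) (.of_forall fun t ↦ ?_)
    simpa [bedist] using tendsto_const_nhds.min
      ((tendsto_const_nhds (x := g t)).edist (hg.tendsto_approx t))
  rw [lintegral_zero] at tendsto_lintegral
  obtain ⟨n, hn⟩ := (tendsto_lintegral.eventually_le_const hε.bot_lt).exists
  exact ⟨hg.approx n, (lintegral_congr_ae (hfg.mono fun t ht ↦ by rw [ht])).trans_le hn⟩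

theorem tendsto_setLIntegral_bedist_simpleFunc_comp_add_right (s : SimpleFunc ℝ V) (a b : ℝ) :
    Tendsto (fun τ ↦ ∫⁻ t in Set.Icc a b, bedist (s t) (s (t + τ))) (𝓝 0) (𝓝 0) := by
  let E (v : V) : Set ℝ := s ⁻¹' {v} ∩ Set.Icc (a - 1) (b + 1)
  have measurableSet_E (v) : MeasurableSet (E v) :=
    (s.measurableSet_preimage _).inter measurableSet_Icc
  have volume_E_ne_top (v) : volume (E v) ≠ ⊤ :=
    measure_ne_top_of_subset Set.inter_subset_right (by simp)
  have tendsto_sum : Tendsto (fun τ ↦ ∑ v ∈ s.range, volume (symmDiff ((· + τ) ⁻¹' E v) (E v)))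
      (𝓝 0) (𝓝 (∑ _ ∈ s.range, 0)) :=
    tendsto_finsetSum _ fun v _ ↦ tendsto_measure_symmDiff_preimage_add_right volume
      (measurableSet_E v) (volume_E_ne_top v)
  rw [Finset.sum_const_zero] at tendsto_sum
  refine tendsto_of_tendsto_of_tendsto_of_le_of_le' tendsto_const_nhds tendsto_sum
    (.of_forall fun _ ↦ zero_le) ?_
  filter_upwards [Metric.closedBall_mem_nhds 0 one_pos] with τ hτ
  rw [mem_closedBall_zero_iff, Real.norm_eq_abs, abs_le] at hτ
  have bedist_le (t) (ht : t ∈ Set.Icc a b) : bedist (s t) (s (t + τ)) ≤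
      ∑ v ∈ s.range, (symmDiff ((· + τ) ⁻¹' E v) (E v)).indicator 1 t := by
    by_cases h : s t = s (t + τ)
    · rw [h, bedist_self]; exact zero_le
    · have t_mem : t ∈ symmDiff ((· + τ) ⁻¹' E (s t)) (E (s t)) :=
        .inr ⟨⟨rfl, by linarith [ht.1], by linarith [ht.2]⟩, fun ht' ↦ h ht'.1.symm⟩
      calc bedist (s t) (s (t + τ)) ≤ 1 := bedist_le_one _ _
        _ = (symmDiff ((· + τ) ⁻¹' E (s t)) (E (s t))).indicator 1 t := by
          rw [Set.indicator_of_mem t_mem, Pi.one_apply]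
        _ ≤ _ := Finset.single_le_sum_of_canonicallyOrdered
          (f := fun v ↦ (symmDiff ((· + τ) ⁻¹' E v) (E v)).indicator 1 t) (s.mem_range_self t)
  have measurableSet_symmDiff (v) : MeasurableSet (symmDiff ((· + τ) ⁻¹' E v) (E v)) :=
    (measurable_add_const τ (measurableSet_E v)).symmDiff (measurableSet_E v)
  calc ∫⁻ t in Set.Icc a b, bedist (s t) (s (t + τ))
    _ ≤ ∫⁻ t, ∑ v ∈ s.range, (symmDiff ((· + τ) ⁻¹' E v) (E v)).indicator 1 t :=
      (setLIntegral_mono' measurableSet_Icc bedist_le).trans (setLIntegral_le_lintegral _ _)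
    _ = ∑ v ∈ s.range, volume (symmDiff ((· + τ) ⁻¹' E v) (E v)) := by
      rw [lintegral_finsetSum _ fun v _ ↦ measurable_one.indicator (measurableSet_symmDiff v)]
      exact Finset.sum_congr rfl fun v _ ↦ lintegral_indicator_one (measurableSet_symmDiff v)

theorem tendsto_setLIntegral_bedist_comp_add_right {f : ℝ → V} (hf : AEStronglyMeasurable f)
    (a b : ℝ) :
    Tendsto (fun τ ↦ ∫⁻ t in Set.Icc a b, bedist (f t) (f (t + τ))) (𝓝 0) (𝓝 0) := by
  refine ENNReal.tendsto_nhds_zero.2 fun ε hε ↦ ?_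
  have hε₃ : ε / 3 ≠ 0 := ENNReal.div_ne_zero.2 ⟨hε.ne', by simp⟩
  obtain ⟨s, hs⟩ := exists_simpleFunc_lintegral_bedist_le
    (hf.restrict (s := Set.Icc (a - 1) (b + 1))) hε₃
  have hs_mono {c d : ℝ} (hc : a - 1 ≤ c) (hd : d ≤ b + 1) :
      ∫⁻ t in Set.Icc c d, bedist (f t) (s t) ≤ ε / 3 :=
    (lintegral_mono_set (Set.Icc_subset_Icc hc hd)).trans hs
  filter_upwards [Metric.closedBall_mem_nhds 0 one_pos, (ENNReal.tendsto_nhds_zero.1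
    (tendsto_setLIntegral_bedist_simpleFunc_comp_add_right s a b)) _ hε₃.bot_lt] with τ hτ hsτ
  rw [mem_closedBall_zero_iff, Real.norm_eq_abs, abs_le] at hτ
  have hs_meas : AEStronglyMeasurable s := s.aestronglyMeasurable
  have hs_comp : AEStronglyMeasurable fun t ↦ s (t + τ) :=
    hs_meas.comp_measurePreserving (measurePreserving_add_right volume τ)
  calc ∫⁻ t in Set.Icc a b, bedist (f t) (f (t + τ))
    _ ≤ ∫⁻ t in Set.Icc a b, (bedist (f t) (s t) +
          (bedist (s t) (s (t + τ)) + bedist (f (t + τ)) (s (t + τ)))) := by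
      refine lintegral_mono fun t ↦ (bedist_triangle _ (s t) _).trans (add_le_add le_rfl ?_)
      rw [bedist_comm (f (t + τ))]
      exact bedist_triangle _ _ _
    _ = (∫⁻ t in Set.Icc a b, bedist (f t) (s t)) + ((∫⁻ t in Set.Icc a b,
          bedist (s t) (s (t + τ))) + ∫⁻ t in Set.Icc (a + τ) (b + τ), bedist (f t) (s t)) := by
      rw [lintegral_add_left' (aemeasurable_bedist hf hs_meas).restrict,
        lintegral_add_left' (aemeasurable_bedist hs_meas hs_comp).restrict,
        setLIntegral_Icc_comp_add_right fun t ↦ bedist (f t) (s t)]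
    _ ≤ ε / 3 + (ε / 3 + ε / 3) := by
      gcongr
      · exact hs_mono (by linarith) (by linarith)
      · exact hs_mono (by linarith) (by linarith)
    _ = ε := by rw [← add_assoc, ENNReal.add_thirds]

end TranslationContinuity

section AlmostPeriodic

theorem exists_finite_forall_exists_sub_lt {N : AddGroupSeminorm ℝ} (hN : Tendsto N (𝓝 0) (𝓝 0))
    (h : ∀ ε > 0, RelDense {τ | N τ < ε}) {ε : ℝ} (hε : 0 < ε) :
    ∃ s : Set ℝ, s.Finite ∧ ∀ x, ∃ a ∈ s, N (x - a) < ε := by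
  obtain ⟨a, -, ha⟩ := h (ε / 2) (half_pos hε)
  obtain ⟨δ, hδ, hNδ⟩ := Metric.eventually_nhds_iff.1 (hN.eventually_lt_const (half_pos hε))
  obtain ⟨s, -, hs, hs_cover⟩ := (isCompact_Icc (a := 0) (b := a)).finite_cover_balls hδ
  refine ⟨s, hs, fun x ↦ ?_⟩
  obtain ⟨σ, hσ, hσN : N σ < ε / 2⟩ := ha (x - a)
  have sub_mem : x - σ ∈ Set.Icc 0 a := ⟨by linarith [hσ.2], by linarith [hσ.1]⟩
  obtain ⟨c, hc, hxc⟩ := Set.mem_iUnion₂.1 (hs_cover sub_mem)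
  have N_lt : N (x - σ - c) < ε / 2 := hNδ (by rwa [dist_zero_right, ← dist_eq_norm])
  refine ⟨c, hc, ?_⟩
  calc N (x - c) = N (σ + (x - σ - c)) := by congr 1; ring
    _ ≤ N σ + N (x - σ - c) := map_add_le_add N _ _
    _ < ε := by linarith

variable {V : Type*} [PseudoMetricSpace V] {f : ℝ → V}

/-- The Weyl distance `D^{(ρ')}_1(f, f(· + τ))` between `f` and its translate, `ρ' = bdist`. -/
def translationDist (f : ℝ → V) (τ : ℝ) : ℝ≥0∞ :=
  upperMean fun t ↦ bedist (f t) (f (t + τ))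

theorem weylDinf_bdist_eq_translationDist (f : ℝ → V) (τ : ℝ) :
    weylDinf bdist 1 f (fun t ↦ f (t + τ)) = translationDist f τ := by
  simp only [weylDinf_one_eq_upperMean, ofReal_bdist, translationDist]

theorem translationDist_le_one (f : ℝ → V) (τ : ℝ) : translationDist f τ ≤ 1 :=
  (upperMean_mono (.of_forall fun _ ↦ bedist_le_one _ _)).trans_eq (upperMean_const 1)

theorem translationDist_ne_top (f : ℝ → V) (τ : ℝ) : translationDist f τ ≠ ⊤ :=
  ne_top_of_le_ne_top ENNReal.one_ne_top (translationDist_le_one f τ)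

theorem aestronglyMeasurable_comp_add_right (hf : AEStronglyMeasurable f) (τ : ℝ) :
    AEStronglyMeasurable fun t ↦ f (t + τ) :=
  hf.comp_measurePreserving (measurePreserving_add_right volume τ)

theorem aemeasurable_bedist_comp_add_right (hf : AEStronglyMeasurable f) (τ : ℝ) :
    AEMeasurable fun t ↦ bedist (f t) (f (t + τ)) :=
  aemeasurable_bedist hf (aestronglyMeasurable_comp_add_right hf τ)

theorem translationDist_add_le (hf : AEStronglyMeasurable f) (x y : ℝ) :
    translationDist f (x + y) ≤ translationDist f x + translationDist f y :=
  calc translationDist f (x + y)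
    _ ≤ upperMean fun t ↦ bedist (f t) (f (t + x)) + bedist (f (t + x)) (f (t + x + y)) :=
      upperMean_mono (.of_forall fun t ↦ by simpa only [add_assoc] using bedist_triangle _ _ _)
    _ ≤ translationDist f x + upperMean fun t ↦ bedist (f (t + x)) (f (t + x + y)) :=
      upperMean_add_le (aemeasurable_bedist_comp_add_right hf x) _
    _ = translationDist f x + translationDist f y :=
      congrArg _ (upperMean_comp_add_right (fun t ↦ bedist (f t) (f (t + y))) x)

theorem translationDist_neg (f : ℝ → V) (x : ℝ) : translationDist f (-x) = translationDist f x :=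
  calc translationDist f (-x)
    _ = upperMean fun t ↦ bedist (f (t + x)) (f (t + x + -x)) :=
      (upperMean_comp_add_right (fun t ↦ bedist (f t) (f (t + -x))) x).symm
    _ = translationDist f x := by simp only [add_neg_cancel_right, bedist_comm, translationDist]

/-- `translationDist f` as a seminorm on the group of translations. -/
def weylNorm (f : ℝ → V) (hf : AEStronglyMeasurable f) : AddGroupSeminorm ℝ where
  toFun τ := (translationDist f τ).toReal
  map_zero' := by simp [translationDist, bedist_self, upperMean_const]
  add_le' x y := by
    rw [← ENNReal.toReal_add (translationDist_ne_top f x) (translationDist_ne_top f y)]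
    exact ENNReal.toReal_mono (ENNReal.add_ne_top.2
      ⟨translationDist_ne_top f x, translationDist_ne_top f y⟩) (translationDist_add_le hf x y)
  neg' x := by rw [translationDist_neg]

theorem tendsto_weylNorm_iff {ι : Type*} {F : Filter ι} (hf : AEStronglyMeasurable f) {τ : ι → ℝ} :
    Tendsto (fun j ↦ weylNorm f hf (τ j)) F (𝓝 0) ↔
      Tendsto (fun j ↦ translationDist f (τ j)) F (𝓝 0) :=
  ENNReal.tendsto_toReal_zero_iff fun j ↦ translationDist_ne_top f (τ j)

theorem WMod_bdist_eq_frequencyModule (hf : AEStronglyMeasurable f) :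
    WMod bdist f = frequencyModule (weylNorm f hf) := by
  ext l
  simp only [SetLike.mem_coe, mem_frequencyModule_iff_seq, tendsto_weylNorm_iff, WMod,
    weylDinf_bdist_eq_translationDist, Set.mem_ofPred_eq]

/-- Weyl almost periodicity of order `1` with respect to the truncated metric. Almost periods are
defined by `≤ ε` with `ε` in `ℝ≥0∞`, which is equivalent to `< ε` with real `ε`. -/
structure IsWeylAlmostPeriodic (f : ℝ → V) : Prop where
  aestronglyMeasurable : AEStronglyMeasurable f
  relDense : ∀ ε : ℝ≥0∞, ε ≠ 0 → ∃ l > 0,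
    RelDense {σ | windowMean l (fun t ↦ bedist (f t) (f (t + σ))) ≤ ε}

theorem isWeylAlmostPeriodic_of_relDense_aperiodsL (hf : AEStronglyMeasurable f)
    (h : ∀ ε > 0, ∃ l > 0, RelDense (APeriodsL dist 1 l ε f)) : IsWeylAlmostPeriodic f := by
  refine ⟨hf, fun ε hε ↦ ?_⟩
  obtain ⟨δ, -, hδε⟩ := ENNReal.lt_iff_exists_real_btwn.1 hε.bot_lt
  obtain ⟨l, hl, a, ha, hT⟩ := h δ (ENNReal.ofReal_pos.1 hδε.1)
  refine ⟨l, hl, a, ha, fun ξ ↦ (hT ξ).mono <| Set.inter_subset_inter_right _ fun σ hσ ↦ ?_⟩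
  have hσ : windowMean l (fun t ↦ edist (f t) (f (t + σ))) < ENNReal.ofReal δ := by
    simpa only [APeriodsL, weylD_one_eq_windowMean, ← edist_dist] using! hσ
  exact (windowMean_mono (.of_forall fun _ ↦ min_le_right _ _)).trans (hσ.trans hδε.2).le

variable (hf : IsWeylAlmostPeriodic f)
include hf

theorem IsWeylAlmostPeriodic.tendsto_translationDist :
    Tendsto (translationDist f) (𝓝 0) (𝓝 0) := by
  refine ENNReal.tendsto_nhds_zero.2 fun ε hε ↦ ?_
  have hε₈ : ε / 2 / 2 / 2 ≠ 0 := by simpa using hε.ne'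
  obtain ⟨l, hl, a, -, hT⟩ := hf.relDense _ hε₈
  have tendsto_integral := ENNReal.Tendsto.const_mul (a := ENNReal.ofReal (1 / l))
    (tendsto_setLIntegral_bedist_comp_add_right hf.aestronglyMeasurable 0 (a + l))
    (.inr ENNReal.ofReal_ne_top)
  rw [mul_zero] at tendsto_integral
  filter_upwards [tendsto_integral.eventually_le_const (u := ε / 2 / 2) (by simpa using hε.ne')]
    with τ hτ
  refine (upperMean_le_of_forall_mem_le_comp_add (θ' := fun t ↦ bedist (f t) (f (t + τ)))
    (c := ε / 2 / 2) hl hT fun σ hσ ↦ ?_).trans ?_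
  · let ρ t := bedist (f t) (f (t + σ))
    have hρ : AEMeasurable ρ := aemeasurable_bedist_comp_add_right hf.aestronglyMeasurable σ
    refine ⟨fun t ↦ ρ t + ρ (t + τ), ?_, ?_, fun t ↦ ?_⟩
    · exact hρ.add (hρ.comp_quasiMeasurePreserving
        (measurePreserving_add_right volume τ).quasiMeasurePreserving)
    · refine (windowMean_add_le hρ _).trans ?_
      rw [windowMean_comp_add_right, ← ENNReal.add_halves (ε / 2 / 2)]
      exact add_le_add hσ hσ
    · calc bedist (f t) (f (t + τ))
        _ ≤ ρ t + (bedist (f (t + σ)) (f (t + σ + τ)) + bedist (f (t + σ + τ)) (f (t + τ))) :=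
          (bedist_triangle _ _ _).trans (add_le_add le_rfl (bedist_triangle _ _ _))
        _ = ρ t + ρ (t + τ) + bedist (f (t + σ)) (f (t + σ + τ)) := by
          rw [bedist_comm (f (t + σ + τ)), add_right_comm t σ τ, add_comm (bedist (f (t + σ)) _),
            ← add_assoc]
  · calc 2 * (ε / 2 / 2 + _) ≤ 2 * (ε / 2 / 2 + ε / 2 / 2) := by gcongr
      _ = ε := by rw [ENNReal.add_halves, ENNReal.mul_div_cancel two_ne_zero ENNReal.ofNat_ne_top]

theorem IsWeylAlmostPeriodic.relDense_weylNorm_lt {ε : ℝ} (hε : 0 < ε) :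
    RelDense {τ | weylNorm f hf.aestronglyMeasurable τ < ε} := by
  obtain ⟨l, hl, a, ha, hT⟩ := hf.relDense (ENNReal.ofReal (ε / 4)) (by simpa using hε)
  refine ⟨a, ha, fun ξ ↦ (hT ξ).mono <| Set.inter_subset_inter_right _ fun σ hσ ↦ ?_⟩
  have le : translationDist f σ ≤ ENNReal.ofReal (ε / 2) := by
    refine (upperMean_le_two_mul_windowMean hl _).trans ((mul_le_mul_right hσ 2).trans_eq ?_)
    rw [← ENNReal.ofReal_ofNat 2, ← ENNReal.ofReal_mul zero_le_two]
    congr 1; ring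
  exact (ENNReal.toReal_le_of_le_ofReal (half_pos hε).le le).trans_lt (half_lt_self hε)

end AlmostPeriodic

section Tightness

open Metric

variable {V : Type*} [PseudoMetricSpace V]

theorem min_one_infEDist_le_bedist_add (x y : V) (F : Set V) :
    min 1 (infEDist x F) ≤ bedist x y + min 1 (infEDist y F) := by
  simp only [bedist, ← min_add_add_left, ← min_add_add_right]
  refine le_min (le_min ?_ ?_) (le_min ?_ ?_)
  · exact (min_le_left _ _).trans le_self_add
  · exact (min_le_left _ _).trans le_add_self
  · exact (min_le_left _ _).trans le_self_add
  · exact (min_le_right _ _).trans infEDist_le_edist_add_infEDist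

theorem IsWeylAlmostPeriodic.exists_finite_upperMean_infEDist_le {f : ℝ → V}
    (hf : IsWeylAlmostPeriodic f) {ε : ℝ≥0∞} (hε : ε ≠ 0) :
    ∃ F : Set V, F.Finite ∧ upperMean (fun t ↦ min 1 (infEDist (f t) F)) ≤ ε := by
  obtain ⟨l, hl, a, -, hT⟩ := hf.relDense (ε / 2 / 2) (by simpa using hε)
  have hl₀ : ENNReal.ofReal l ≠ 0 := by simpa using hl
  obtain ⟨s, hs⟩ := exists_simpleFunc_lintegral_bedist_le
    (hf.aestronglyMeasurable.restrict (s := Set.Icc 0 (a + l)))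
    (mul_ne_zero hl₀ (by simpa using hε : ε / 2 / 2 ≠ 0))
  refine ⟨Set.range s, s.finite_range, ?_⟩
  have integral_le : ∫⁻ t in Set.Icc 0 (a + l), min 1 (infEDist (f t) (Set.range s)) ≤
      ENNReal.ofReal l * (ε / 2 / 2) :=
    (lintegral_mono fun t ↦ min_le_min_left 1
      (infEDist_le_edist_of_mem (Set.mem_range_self t))).trans hs
  calc upperMean (fun t ↦ min 1 (infEDist (f t) (Set.range s)))
    _ ≤ 2 * (ε / 2 / 2 + ENNReal.ofReal (1 / l) *
          ∫⁻ t in Set.Icc 0 (a + l), min 1 (infEDist (f t) (Set.range s))) :=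
      upperMean_le_of_forall_mem_le_comp_add hl hT fun σ hσ ↦
        ⟨_, aemeasurable_bedist_comp_add_right hf.aestronglyMeasurable σ, hσ,
          fun t ↦ min_one_infEDist_le_bedist_add _ _ _⟩
    _ ≤ 2 * (ε / 2 / 2 + ENNReal.ofReal (1 / l) * (ENNReal.ofReal l * (ε / 2 / 2))) := by
      gcongr
    _ = ε := by
      rw [← mul_assoc, ← ENNReal.ofReal_mul (by positivity), one_div_mul_cancel hl.ne',
        ENNReal.ofReal_one, one_mul, ENNReal.add_halves,
        ENNReal.mul_div_cancel two_ne_zero ENNReal.ofNat_ne_top]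

theorem totallyBounded_range_of_infEDist_lt {F : ℕ → Set V} (hF : ∀ k, (F k).Finite)
    {r : ℕ → ℝ≥0∞} (hr : Tendsto r atTop (𝓝 0)) {x : ℕ → V}
    (hx : ∀ n, ∀ k ≤ n, infEDist (x n) (F k) < r k) : TotallyBounded (Set.range x) := by
  refine EMetric.totallyBounded_iff.2 fun ε hε ↦ ?_
  obtain ⟨k, hk⟩ := (hr.eventually_lt_const hε).exists
  refine ⟨F k ∪ x '' Set.Iio k, (hF k).union ((Set.finite_Iio k).image x), ?_⟩
  rintro _ ⟨n, rfl⟩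
  rw [Set.mem_iUnion₂]
  rcases lt_or_ge n k with hn | hn
  · exact ⟨x n, .inr ⟨n, hn, rfl⟩, mem_eball_self hε⟩
  · obtain ⟨y, hy, hxy⟩ := infEDist_lt_iff.1 ((hx n k hn).trans hk)
    exact ⟨y, .inl hy, hxy⟩

variable [CompleteSpace V]

theorem exists_forall_mem_exists_le_infEDist {W : ℕ → Set V} (hW : ∀ n, IsClosed (W n))
    (hW_anti : Antitone W) (hW_empty : ⋂ n, W n = ∅) {F : ℕ → Set V} (hF : ∀ k, (F k).Finite)
    {r : ℕ → ℝ≥0∞} (hr : Tendsto r atTop (𝓝 0)) :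
    ∃ n, ∀ x ∈ W n, ∃ k ≤ n, r k ≤ infEDist x (F k) := by
  by_contra! h
  choose x hxW hx using h
  have isCompact_closure : IsCompact (closure (Set.range x)) :=
    (totallyBounded_range_of_infEDist_lt hF hr hx).closure.isCompact_of_isComplete
      isClosed_closure.isComplete
  obtain ⟨y, -, φ, hφ, hxy⟩ :=
    isCompact_closure.tendsto_subseq fun n ↦ subset_closure (Set.mem_range_self n)
  have y_mem (n) : y ∈ W n := (hW n).mem_of_tendsto hxy <| (eventually_ge_atTop n).mono fun m hm ↦
    hW_anti (hm.trans (hφ.le_apply)) (hxW _)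
  exact (hW_empty ▸ Set.mem_iInter.2 y_mem : y ∈ (∅ : Set V))

theorem IsWeylAlmostPeriodic.exists_upperMean_indicator_le {f : ℝ → V}
    (hf : IsWeylAlmostPeriodic f) {W : ℕ → Set V} (hW : ∀ n, IsClosed (W n)) (hW_anti : Antitone W)
    (hW_empty : ⋂ n, W n = ∅) {ε : ℝ≥0∞} (hε : ε ≠ 0) :
    ∃ n, upperMean (fun t ↦ (W n).indicator 1 (f t)) ≤ ε := by
  let r (k : ℕ) : ℝ≥0∞ := (k + 1 : ℕ)⁻¹
  have r_ne_zero (k) : r k ≠ 0 := ENNReal.inv_ne_zero.2 (ENNReal.natCast_ne_top _)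
  have r_le_one (k) : r k ≤ 1 := ENNReal.inv_le_one.2 (by simp)
  have r_ne_top (k) : r k ≠ ⊤ := ne_top_of_le_ne_top ENNReal.one_ne_top (r_le_one k)
  have tendsto_r : Tendsto r atTop (𝓝 0) :=
    ENNReal.tendsto_inv_nat_nhds_zero.comp (tendsto_add_atTop_nat 1)
  obtain ⟨δ, hδ, hδε⟩ := ENNReal.exists_pos_sum_of_countable' hε ℕ
  choose F hF hFδ using fun k ↦
    hf.exists_finite_upperMean_infEDist_le (mul_ne_zero (r_ne_zero k) (hδ k).ne')
  obtain ⟨n, hn⟩ := exists_forall_mem_exists_le_infEDist hW hW_anti hW_empty hF tendsto_r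
  have aemeasurable_infEDist (k) : AEMeasurable fun t ↦ (r k)⁻¹ * min 1 (infEDist (f t) (F k)) :=
    (aemeasurable_const.min (continuous_infEDist.comp_aestronglyMeasurable
      hf.aestronglyMeasurable).aemeasurable).const_mul _
  have indicator_le (x : V) : (W n).indicator 1 x ≤
      ∑ k ∈ Finset.range (n + 1), (r k)⁻¹ * min 1 (infEDist x (F k)) := by
    refine Set.indicator_apply_le' (fun hx ↦ ?_) fun _ ↦ zero_le
    obtain ⟨k, hkn, hk⟩ := hn x hx
    calc (1 : ℝ≥0∞) = (r k)⁻¹ * r k := (ENNReal.inv_mul_cancel (r_ne_zero k) (r_ne_top k)).symm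
      _ ≤ (r k)⁻¹ * min 1 (infEDist x (F k)) := by gcongr; exact le_min (r_le_one k) hk
      _ ≤ ∑ k ∈ Finset.range (n + 1), (r k)⁻¹ * min 1 (infEDist x (F k)) :=
        Finset.single_le_sum_of_canonicallyOrdered
          (f := fun k ↦ (r k)⁻¹ * min 1 (infEDist x (F k))) (Finset.mem_range_succ_iff.2 hkn)
  refine ⟨n, ?_⟩
  calc upperMean (fun t ↦ (W n).indicator 1 (f t))
    _ ≤ ∑ k ∈ Finset.range (n + 1), upperMean fun t ↦ (r k)⁻¹ * min 1 (infEDist (f t) (F k)) :=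
      (upperMean_mono (.of_forall fun t ↦ indicator_le (f t))).trans
        (upperMean_finset_sum_le _ aemeasurable_infEDist)
    _ ≤ ∑ k ∈ Finset.range (n + 1), δ k := by
      refine Finset.sum_le_sum fun k _ ↦ ?_
      rw [upperMean_const_mul (ENNReal.inv_ne_top.2 (r_ne_zero k))]
      refine (mul_le_mul_right (hFδ k) _).trans_eq ?_
      rw [← mul_assoc, ENNReal.inv_mul_cancel (r_ne_zero k) (r_ne_top k), one_mul]
    _ ≤ ε := (ENNReal.sum_le_tsum _).trans hδε.le

end Tightness

section InducingFamily

open Metric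

theorem exists_finset_forall_edist_lt_imp {X Y ι : Type*} {Z : ι → Type*}
    [∀ j, PseudoMetricSpace (Z j)] {h : ∀ j, X → Z j} {g : X → Y} {v : X} {l : Filter Y}
    (hg : Tendsto g (⨅ j, comap (h j) (𝓝 (h j v))) l) {W : Set Y} (hW : W ∈ l) :
    ∃ J : Finset ι, ∃ r > 0, r ≤ 1 ∧
      ∀ y, (∀ j ∈ J, edist (h j y) (h j v) < r + r) → g y ∈ W := by
  obtain ⟨⟨J, δ⟩, ⟨hJ, hδ⟩, hJδ⟩ :=
    (HasBasis.iInf' fun j ↦ (nhds_basis_eball (x := h j v)).comap (h j)).mem_iff.1 (hg hW)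
  have eventually_le : ∀ᶠ r in 𝓝[>] (0 : ℝ≥0∞), ∀ j ∈ J, r ≤ δ j / 2 :=
    (eventually_all_finite hJ).2 fun j hj ↦
      nhdsWithin_le_nhds (Iic_mem_nhds (ENNReal.half_pos (hδ j hj).ne'))
  have eventually_le_one : ∀ᶠ r in 𝓝[>] (0 : ℝ≥0∞), r ≤ 1 :=
    nhdsWithin_le_nhds (Iic_mem_nhds one_pos)
  obtain ⟨r, hrδ, hr₁, hr⟩ :=
    (eventually_le.and (eventually_le_one.and self_mem_nhdsWithin)).exists
  refine ⟨hJ.toFinset, r, hr, hr₁, fun y hy ↦ hJδ (Set.mem_iInter₂.2 fun j hj ↦ ?_)⟩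
  calc edist (h j y) (h j v)
    _ < r + r := hy j (hJ.mem_toFinset.2 hj)
    _ ≤ δ j / 2 + δ j / 2 := add_le_add (hrδ j hj) (hrδ j hj)
    _ = δ j := ENNReal.add_halves _

variable {V : Type*} [PseudoMetricSpace V] {f : ℝ → V}

theorem exists_seq_subset_iUnion_of_isSeparable {S : Set V} (hS : IsSeparable S) [Nonempty V]
    {O : V → Set V} (hO : ∀ v, O v ∈ 𝓝 v) : ∃ u : ℕ → V, S ⊆ ⋃ n, O (u n) := by
  have : SecondCountableTopology S := hS.secondCountableTopology
  have isLindelof : IsLindelof S := isLindelof_iff_lindelofSpace.2 inferInstance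
  obtain ⟨c, hc, -, hSc⟩ := isLindelof.elim_nhds_subcover O fun v _ ↦ hO v
  obtain ⟨u, hu⟩ := Set.countable_iff_exists_subset_range.1 hc
  refine ⟨u, hSc.trans (Set.iUnion₂_subset fun v hv ↦ ?_)⟩
  obtain ⟨n, rfl⟩ := hu hv
  exact Set.subset_iUnion (fun n ↦ O (u n)) n

theorem IsWeylAlmostPeriodic.exists_finset_upperMean_indicator_le [CompleteSpace V]
    (hf : IsWeylAlmostPeriodic f) {O : V → Set V} (hO : ∀ v, O v ∈ 𝓝 v) {ε : ℝ≥0∞} (hε : ε ≠ 0) :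
    ∃ s : Finset V, upperMean (fun t ↦ (⋃ v ∈ s, O v)ᶜ.indicator 1 (f t)) ≤ ε := by
  classical
  have : Nonempty V := ⟨f 0⟩
  obtain ⟨S, hS, hfS⟩ := hf.aestronglyMeasurable.isSeparable_ae_range
  obtain ⟨u, hu⟩ := exists_seq_subset_iUnion_of_isSeparable hS.closure
    (O := fun v ↦ interior (O v)) fun v ↦ interior_mem_nhds.2 (hO v)
  let W (n : ℕ) : Set V := closure S \ ⋃ k < n, interior (O (u k))
  have W_closed (n) : IsClosed (W n) :=
    isClosed_closure.sdiff (isOpen_biUnion fun _ _ ↦ isOpen_interior)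
  have W_anti : Antitone W := fun m n hmn ↦
    Set.sdiff_subset_sdiff_right
      (Set.biUnion_mono (fun _ hk ↦ lt_of_lt_of_le hk hmn) fun _ _ ↦ le_rfl)
  have W_empty : ⋂ n, W n = ∅ := by
    refine Set.eq_empty_of_forall_notMem fun x hx ↦ ?_
    obtain ⟨k, hk⟩ := Set.mem_iUnion.1 (hu (Set.mem_iInter.1 hx 0).1)
    exact (Set.mem_iInter.1 hx (k + 1)).2 (Set.mem_biUnion (lt_add_one k) hk)
  obtain ⟨n, hn⟩ := hf.exists_upperMean_indicator_le W_closed W_anti W_empty hε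
  refine ⟨(Finset.range n).image u, (upperMean_mono ?_).trans hn⟩
  filter_upwards [hfS] with t ht
  refine Set.indicator_apply_le' (fun hOt ↦ ?_) fun _ ↦ zero_le
  have mem : f t ∈ W n := by
    refine ⟨subset_closure ht, fun hx ↦ hOt ?_⟩
    obtain ⟨k, hk, hxk⟩ := Set.mem_iUnion₂.1 hx
    exact Set.mem_biUnion (Finset.mem_image_of_mem u (Finset.mem_range.2 hk)) (interior_subset hxk)
  rw [Set.indicator_of_mem mem]

variable {ι : Type*} {Z : ι → Type*} [∀ j, PseudoMetricSpace (Z j)] {h : ∀ j, V → Z j}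
  {Y : Type*} [PseudoMetricSpace Y] {g : V → Y}

theorem exists_mem_nhds_bedist_le (hh : ∀ j, Continuous (h j)) {v : V}
    (hg : Tendsto g (⨅ j, comap (h j) (𝓝 (h j v))) (𝓝 (g v))) {ε : ℝ≥0∞} (hε : ε ≠ 0) :
    ∃ O ∈ 𝓝 v, ∃ (J : Finset ι) (c : ℝ≥0∞), c ≠ ⊤ ∧ ∀ x ∈ O, ∀ y,
      bedist (g x) (g y) ≤ ε + c * ∑ j ∈ J, bedist (h j x) (h j y) := by
  have hε₂ : 0 < ε / 2 := ENNReal.half_pos hε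
  obtain ⟨J, r, hr, hr₁, hJr⟩ :=
    exists_finset_forall_edist_lt_imp hg (eball_mem_nhds (g v) hε₂)
  let O : Set V := g ⁻¹' eball (g v) (ε / 2) ∩ ⋂ j ∈ J, h j ⁻¹' eball (h j v) r
  have hO : O ∈ 𝓝 v := inter_mem
    ((hg.mono_left (le_iInf fun j ↦ ((hh j).tendsto v).le_comap)) (eball_mem_nhds _ hε₂))
    ((biInter_finset_mem J).2 fun j _ ↦ (hh j).continuousAt (eball_mem_nhds _ hr))
  refine ⟨O, hO, J, r⁻¹, ENNReal.inv_ne_top.2 hr.ne', fun x hx y ↦ ?_⟩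
  by_cases hxy : ∀ j ∈ J, edist (h j x) (h j y) < r
  · have hgy : edist (g y) (g v) < ε / 2 := hJr y fun j hj ↦
      (edist_triangle_left _ _ _).trans_lt
        (ENNReal.add_lt_add (hxy j hj) (Set.mem_iInter₂.1 hx.2 j hj))
    calc bedist (g x) (g y)
      _ ≤ edist (g x) (g v) + edist (g y) (g v) :=
        (min_le_right _ _).trans (edist_triangle_right _ _ _)
      _ ≤ ε := (add_le_add (le_of_lt hx.1) hgy.le).trans_eq (ENNReal.add_halves ε)
      _ ≤ _ := le_self_add
  · push Not at hxy
    obtain ⟨j, hj, hjxy⟩ := hxy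
    calc bedist (g x) (g y)
      _ ≤ r⁻¹ * r := (bedist_le_one _ _).trans_eq
        (ENNReal.inv_mul_cancel hr.ne' (ne_top_of_le_ne_top ENNReal.one_ne_top hr₁)).symm
      _ ≤ r⁻¹ * ∑ j ∈ J, bedist (h j x) (h j y) := by
        gcongr
        exact (le_min hr₁ hjxy).trans (Finset.single_le_sum_of_canonicallyOrdered
          (f := fun j ↦ bedist (h j x) (h j y)) hj)
      _ ≤ _ := le_add_self

theorem exists_forall_mem_biUnion_bedist_le (hh : ∀ j, Continuous (h j))
    (hg : ∀ v, Tendsto g (⨅ j, comap (h j) (𝓝 (h j v))) (𝓝 (g v))) {ε : ℝ≥0∞} (hε : ε ≠ 0) :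
    ∃ O : V → Set V, (∀ v, O v ∈ 𝓝 v) ∧ ∀ s : Finset V, ∃ (J : Finset ι) (c : ℝ≥0∞), c ≠ ⊤ ∧
      ∀ x ∈ ⋃ v ∈ s, O v, ∀ y, bedist (g x) (g y) ≤ ε + c * ∑ j ∈ J, bedist (h j x) (h j y) := by
  classical
  choose O hO J c hc hbedist using fun v ↦ exists_mem_nhds_bedist_le hh (hg v) hε
  refine ⟨O, hO, fun s ↦ ⟨s.biUnion J, ∑ v ∈ s, c v, ENNReal.sum_ne_top.2 fun v _ ↦ hc v,
    fun x hx y ↦ ?_⟩⟩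
  obtain ⟨v, hv, hvx⟩ := Set.mem_iUnion₂.1 hx
  refine (hbedist v x hvx y).trans ?_
  gcongr
  exacts [Finset.single_le_sum_of_canonicallyOrdered hv, Finset.subset_biUnion_of_mem J hv]

variable [CompleteSpace V]

theorem IsWeylAlmostPeriodic.exists_translationDist_comp_le (hf : IsWeylAlmostPeriodic f)
    (hh : ∀ j, Continuous (h j)) (hg : ∀ v, Tendsto g (⨅ j, comap (h j) (𝓝 (h j v))) (𝓝 (g v)))
    {ε : ℝ≥0∞} (hε : ε ≠ 0) : ∃ (J : Finset ι) (c : ℝ≥0∞), c ≠ ⊤ ∧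
      ∀ τ, translationDist (g ∘ f) τ ≤ ε + c * ∑ j ∈ J, translationDist (h j ∘ f) τ := by
  have hε₂ : ε / 2 ≠ 0 := by simpa using hε
  obtain ⟨O, hO, exists_bedist_le⟩ := exists_forall_mem_biUnion_bedist_le hh hg hε₂
  obtain ⟨s, hs⟩ := hf.exists_finset_upperMean_indicator_le hO hε₂
  obtain ⟨J, c, hc, bedist_le⟩ := exists_bedist_le s
  refine ⟨J, c, hc, fun τ ↦ ?_⟩
  let σ (j : ι) (t : ℝ) : ℝ≥0∞ := bedist (h j (f t)) (h j (f (t + τ)))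
  have aemeasurable_σ (j) : AEMeasurable (σ j) := aemeasurable_bedist_comp_add_right
    ((hh j).comp_aestronglyMeasurable hf.aestronglyMeasurable) τ
  have aemeasurable_sum : AEMeasurable fun t ↦ c * ∑ j ∈ J, σ j t :=
    (Finset.aemeasurable_fun_sum _ fun j _ ↦ aemeasurable_σ j).const_mul c
  have le_add (t : ℝ) : bedist (g (f t)) (g (f (t + τ))) ≤
      ε / 2 + c * ∑ j ∈ J, σ j t + (⋃ v ∈ s, O v)ᶜ.indicator 1 (f t) := by
    by_cases ht : f t ∈ ⋃ v ∈ s, O v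
    · exact (bedist_le _ ht _).trans le_self_add
    · rw [Set.indicator_of_mem (Set.mem_compl ht)]
      exact (bedist_le_one _ _).trans le_add_self
  calc translationDist (g ∘ f) τ
    _ ≤ upperMean (fun t ↦ ε / 2 + c * ∑ j ∈ J, σ j t) +
          upperMean fun t ↦ (⋃ v ∈ s, O v)ᶜ.indicator 1 (f t) :=
      (upperMean_mono (.of_forall le_add)).trans <|
        upperMean_add_le (aemeasurable_const.add aemeasurable_sum) _
    _ ≤ (ε / 2 + c * ∑ j ∈ J, upperMean (σ j)) + ε / 2 := by
      gcongr
      refine (upperMean_add_le aemeasurable_const _).trans ?_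
      rw [upperMean_const, upperMean_const_mul hc]
      gcongr
      exact upperMean_finset_sum_le _ aemeasurable_σ
    _ = ε + c * ∑ j ∈ J, upperMean (σ j) := by rw [add_right_comm, ENNReal.add_halves]

theorem IsWeylAlmostPeriodic.tendsto_translationDist_comp (hf : IsWeylAlmostPeriodic f)
    (hh : ∀ j, Continuous (h j)) (hg : ∀ v, Tendsto g (⨅ j, comap (h j) (𝓝 (h j v))) (𝓝 (g v)))
    {F : Filter ℝ} (hF : ∀ j, Tendsto (translationDist (h j ∘ f)) F (𝓝 0)) :
    Tendsto (translationDist (g ∘ f)) F (𝓝 0) := by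
  refine ENNReal.tendsto_nhds_zero.2 fun ε hε ↦ ?_
  have hε₂ : ε / 2 ≠ 0 := by simpa using hε.ne'
  obtain ⟨J, c, hc, hJ⟩ := hf.exists_translationDist_comp_le hh hg hε₂
  have tendsto_sum : Tendsto (fun τ ↦ c * ∑ j ∈ J, translationDist (h j ∘ f) τ) F
      (𝓝 (c * ∑ _j ∈ J, 0)) :=
    ENNReal.Tendsto.const_mul (tendsto_finsetSum _ fun j _ ↦ hF j) (.inr hc)
  filter_upwards [tendsto_sum.eventually_le_const (u := ε / 2) (by simpa using hε₂.bot_lt)]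
    with τ hτ
  exact (hJ τ).trans ((add_le_add_right hτ _).trans_eq (ENNReal.add_halves ε))

theorem IsWeylAlmostPeriodic.comap_weylNorm_eq_iInf
    (hf : IsWeylAlmostPeriodic f) (hh : ∀ j, Continuous (h j))
    (hV : ∀ v, ⨅ j, comap (h j) (𝓝 (h j v)) ≤ 𝓝 v)
    (hhf : ∀ j, AEStronglyMeasurable (h j ∘ f)) :
    comap (weylNorm f hf.aestronglyMeasurable) (𝓝 0) =
      ⨅ j, comap (weylNorm (h j ∘ f) (hhf j)) (𝓝 0) := by
  refine le_antisymm (le_iInf fun j ↦ tendsto_iff_comap.1 ?_) (tendsto_iff_comap.1 ?_)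
  · refine (tendsto_weylNorm_iff (hhf j)).2 (hf.tendsto_translationDist_comp
      (h := fun _ : Unit ↦ id) (fun _ ↦ continuous_id) (fun v ↦ ?_) fun _ ↦ ?_)
    · simpa only [comap_id, iInf_const, id] using (hh j).tendsto v
    · exact (tendsto_weylNorm_iff hf.aestronglyMeasurable).1 tendsto_comap
  · refine (tendsto_weylNorm_iff hf.aestronglyMeasurable).2
      (hf.tendsto_translationDist_comp (g := id) hh hV fun j ↦ ?_)
    exact (tendsto_weylNorm_iff (hhf j)).1 (tendsto_comap.mono_left (iInf_le _ j))

theorem IsWeylAlmostPeriodic.WMod_eq_closure_iUnion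
    (hf : IsWeylAlmostPeriodic f) (hh : ∀ j, Continuous (h j))
    (hV : ∀ v, ⨅ j, comap (h j) (𝓝 (h j v)) ≤ 𝓝 v) :
    WMod bdist f = (AddSubgroup.closure (⋃ j, WMod bdist (h j ∘ f)) : Set ℝ) := by
  have hhf (j) : AEStronglyMeasurable (h j ∘ f) :=
    (hh j).comp_aestronglyMeasurable hf.aestronglyMeasurable
  have tendsto_weylNorm : Tendsto (weylNorm f hf.aestronglyMeasurable) (𝓝 0) (𝓝 0) :=
    (tendsto_weylNorm_iff hf.aestronglyMeasurable).2 hf.tendsto_translationDist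
  simp only [WMod_bdist_eq_frequencyModule (hhf _),
    WMod_bdist_eq_frequencyModule hf.aestronglyMeasurable, ← AddSubgroup.iSup_eq_closure]
  exact congrArg _ <| frequencyModule_eq_iSup tendsto_weylNorm
    (fun ε hε ↦ exists_finite_forall_exists_sub_lt tendsto_weylNorm
      (fun ε hε ↦ hf.relDense_weylNorm_lt hε) hε)
    (hf.comap_weylNorm_eq_iInf hh hV hhf)

end InducingFamily

section LevyProkhorov

open Metric

theorem isCompact_iInter_cthickening {X : Type*} [PseudoMetricSpace X] [CompleteSpace X]
    {K : ℕ → Set X} (hK : ∀ n, IsCompact (K n)) {r : ℕ → ℝ} (hr : Tendsto r atTop (𝓝 0)) :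
    IsCompact (⋂ n, cthickening (r n) (K n)) := by
  refine TotallyBounded.isCompact_of_isClosed (totallyBounded_iff.2 fun ε hε ↦ ?_)
    (isClosed_iInter fun n ↦ isClosed_cthickening)
  obtain ⟨n, hn⟩ := (hr.eventually_lt_const (half_pos hε)).exists
  obtain ⟨F, hF, hKF⟩ := totallyBounded_iff.1 (hK n).totallyBounded (ε / 2) (half_pos hε)
  refine ⟨F, hF, (Set.iInter_subset _ n).trans fun x hx ↦ ?_⟩
  obtain ⟨y, hy, hxy⟩ :=
    mem_thickening_iff.1 (cthickening_subset_thickening' (half_pos hε) hn (K n) hx)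
  obtain ⟨z, hz, hyz⟩ := Set.mem_iUnion₂.1 (hKF hy)
  exact Set.mem_biUnion hz ((dist_triangle x y z).trans_lt (by linarith [mem_ball.1 hyz]))

theorem iInf_comap_integral_le_nhds {U : Type*} [PseudoMetricSpace U] [SeparableSpace U]
    [MeasurableSpace U] [OpensMeasurableSpace U] (P : LevyProkhorov (ProbabilityMeasure U)) :
    ⨅ 𝓕 : BoundedContinuousFunction U ℝ, comap
      (fun Q : LevyProkhorov (ProbabilityMeasure U) ↦ ∫ x, 𝓕 x ∂(Q.toMeasure : Measure U))
      (𝓝 (∫ x, 𝓕 x ∂(P.toMeasure : Measure U))) ≤ 𝓝 P :=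
  (LevyProkhorov.continuous_ofMeasure_probabilityMeasure.tendsto P.toMeasure).comp <|
    ProbabilityMeasure.tendsto_iff_forall_integral_tendsto.2 fun 𝓕 ↦
      tendsto_comap.mono_left (iInf_le _ 𝓕)

variable {U : Type*} [MetricSpace U] [CompleteSpace U] [SeparableSpace U] [MeasurableSpace U]
  [BorelSpace U]

theorem exists_isCompact_measure_compl_thickening_le
    {S : Set (LevyProkhorov (ProbabilityMeasure U))} (hS : TotallyBounded S) {ε : ℝ≥0∞}
    (hε : ε ≠ 0) (hε_top : ε ≠ ⊤) :
    ∃ K : Set U, IsCompact K ∧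
      ∀ P ∈ S, (P.toMeasure : Measure U) (thickening ε.toReal K)ᶜ ≤ ε := by
  have hε₂ : 0 < ε / 2 := ENNReal.half_pos hε
  obtain ⟨F, hF, hSF⟩ := EMetric.totallyBounded_iff.1 hS (ε / 2) hε₂
  have : SecondCountableTopology U := UniformSpace.secondCountable_of_separable U
  obtain ⟨K, hK, hFK⟩ := isTightMeasureSet_iff_exists_isCompact_measure_compl_le.1
    (isTightMeasureSet_of_isCompact_closure (hF.image LevyProkhorov.toMeasure).isCompact.closure)
    (ε / 2) hε₂
  refine ⟨K, hK, fun P hP ↦ ?_⟩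
  obtain ⟨Q, hQ, hPQ⟩ := Set.mem_iUnion₂.1 (hSF hP)
  rw [prob_compl_eq_one_sub isOpen_thickening.measurableSet, tsub_le_iff_left]
  calc (1 : ℝ≥0∞)
    _ = (Q.toMeasure : Measure U) K + (Q.toMeasure : Measure U) Kᶜ :=
      (prob_add_prob_compl hK.measurableSet).symm
    _ ≤ (P.toMeasure : Measure U) (thickening (ε / 2).toReal K) + ε / 2 + ε / 2 :=
      add_le_add (right_measure_le_of_levyProkhorovEDist_lt hPQ hK.measurableSet)
        (hFK _ ⟨_, ⟨Q, hQ, rfl⟩, rfl⟩)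
    _ ≤ (P.toMeasure : Measure U) (thickening ε.toReal K) + ε := by
      rw [add_assoc, ENNReal.add_halves]
      gcongr
      exact ENNReal.half_le_self

theorem isTightMeasureSet_of_totallyBounded {S : Set (LevyProkhorov (ProbabilityMeasure U))}
    (hS : TotallyBounded S) :
    IsTightMeasureSet {(P : Measure U) | P ∈ LevyProkhorov.toMeasure '' S} := by
  refine isTightMeasureSet_iff_exists_isCompact_measure_compl_le.2 fun ε hε ↦ ?_
  obtain ⟨δ, hδ, hδε⟩ := ENNReal.exists_pos_sum_of_countable' hε.ne' ℕ
  choose K hK hSK using fun n ↦ exists_isCompact_measure_compl_thickening_le hS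
    (hδ n).ne' (ENNReal.ne_top_of_tsum_ne_top hδε.ne_top n)
  have tendsto_δ : Tendsto (fun n ↦ (δ n).toReal) atTop (𝓝 0) :=
    (ENNReal.tendsto_toReal ENNReal.zero_ne_top).comp
      (ENNReal.tendsto_atTop_zero_of_tsum_ne_top hδε.ne_top)
  refine ⟨_, isCompact_iInter_cthickening hK tendsto_δ, ?_⟩
  rintro _ ⟨_, ⟨P, hP, rfl⟩, rfl⟩
  calc (P.toMeasure : Measure U) (⋂ n, cthickening (δ n).toReal (K n))ᶜ
    _ ≤ ∑' n, (P.toMeasure : Measure U) (cthickening (δ n).toReal (K n))ᶜ := by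
      rw [Set.compl_iInter]
      exact measure_iUnion_le _
    _ ≤ ∑' n, δ n := by
      gcongr with n
      exact (measure_mono (Set.compl_subset_compl.2 (thickening_subset_cthickening _ _))).trans
        (hSK n P hP)
    _ ≤ ε := hδε.le

instance : CompleteSpace (LevyProkhorov (ProbabilityMeasure U)) := by
  refine complete_of_cauchySeq_tendsto fun P hP ↦ ?_
  have isCompact_closure : IsCompact (closure (LevyProkhorov.toMeasure '' Set.range P)) :=
    isCompact_closure_of_isTightMeasureSet
      (isTightMeasureSet_of_totallyBounded hP.totallyBounded_range)
  obtain ⟨Q, -, hQ⟩ := cauchySeq_tendsto_of_isComplete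
    (isCompact_closure.image LevyProkhorov.continuous_ofMeasure_probabilityMeasure).isComplete
    (fun n ↦ ⟨_, subset_closure ⟨_, ⟨n, rfl⟩, rfl⟩, rfl⟩) hP
  exact ⟨Q, hQ⟩

end LevyProkhorov

end

/-- **The module of a Weyl a.p. measure-valued function.**
For `μ[·;·] ∈ W₁(ℝ, 𝓜(U))`,
`Mod μ[·;·] = Σ_{𝓕 ∈ C_b(U,ℝ)} Mod ∫_U 𝓕(x) μ[dx;·]`, i.e. the module of `μ[·;·]`
equals the additive group generated by the union of the modules of the Weyl a.p. real
functions `t ↦ ∫_U 𝓕(x) μ[dx;t]`, `𝓕 ∈ C_b(U,ℝ)`. -/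
theorem weyl_ap_measure_module {U : Type*} [MetricSpace U] [CompleteSpace U]
    [TopologicalSpace.SeparableSpace U] [MeasurableSpace U] [BorelSpace U] (x₀ : U)
    (μ : ℝ → ProbabilityMeasure U)
    (hμ : MemWp lpDist 1
      (⟨MeasureTheory.Measure.dirac x₀, inferInstance⟩ : ProbabilityMeasure U) μ) :
    WMod (fun μ' ν' => min 1 (lpDist μ' ν')) μ =
      (AddSubgroup.closure (⋃ 𝓕 : BoundedContinuousFunction U ℝ,
        WMod bdist (fun t => ∫ x, 𝓕 x ∂(μ t : Measure U))) : AddSubgroup ℝ) := by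
  let f (t : ℝ) : LevyProkhorov (ProbabilityMeasure U) := .ofMeasure (μ t)
  let h (𝓕 : BoundedContinuousFunction U ℝ) (P : LevyProkhorov (ProbabilityMeasure U)) : ℝ :=
    ∫ x, 𝓕 x ∂(P.toMeasure : Measure U)
  have hf : IsWeylAlmostPeriodic f := isWeylAlmostPeriodic_of_relDense_aperiodsL
    (LevyProkhorov.continuous_ofMeasure_probabilityMeasure.comp_aestronglyMeasurable hμ.1.1) hμ.2
  have hh (𝓕) : Continuous (h 𝓕) :=
    (ProbabilityMeasure.continuous_integral_boundedContinuousFunction 𝓕).comp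
      LevyProkhorov.continuous_toMeasure_probabilityMeasure
  calc WMod (fun μ' ν' => min 1 (lpDist μ' ν')) μ
    _ = WMod bdist f := rfl
    _ = _ := hf.WMod_eq_closure_iUnion hh iInf_comap_integral_le_nhds
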